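/- arXiv:1804.02614 — 2 statements merged into one kernel-verified Lean document; each statement's English description precedes it below -/
import Mathlib

section
/- Under the stated setup and assumptions, let B = Q*A and let B_k be the best rank-k approximation of B. Then in both the spectral norm and the Frobenius norm one has ‖A − Q·B_k‖ ≤ (1 + (σ_1/σ_k)·(γ_k^{2q}/(1−γ_k))·‖Ω_2Ω_1†‖₂)·‖Σ_⊥‖. -/
open scoped ENNReal
open Matrix

/-- The `j`-th largest singular value (0-indexed) of a complex matrix,
obtained as the decreasingly sorted square roots of the eigenvalues of `Mᴴ * M`. -/
noncomputable def sval {m n : ℕ} (M : Matrix (Fin m) (Fin n) ℂ) (j : ℕ) : ℝ :=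
  (List.insertionSort (· ≥ ·)
    ((List.ofFn (Matrix.isHermitian_conjTranspose_mul_self M).eigenvalues).map Real.sqrt)).getD j 0

/-- The Schatten-`p` norm (`p = ∞` gives the spectral norm). -/
noncomputable def schatten {m n : ℕ} (p : ℝ≥0∞) (M : Matrix (Fin m) (Fin n) ℂ) : ℝ :=
  if p = ⊤ then sval M 0
  else (∑ j ∈ Finset.range n, sval M j ^ p.toReal) ^ (1 / p.toReal)

/-- Moore–Penrose pseudoinverse of a full-row-rank matrix. -/
noncomputable def rpinv {a b : ℕ} (M : Matrix (Fin a) (Fin b) ℂ) : Matrix (Fin b) (Fin a) ℂ :=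
  Mᴴ * (M * Mᴴ)⁻¹

/-- Rectangular diagonal matrix with entries `σ (off), σ (off+1), …` on the diagonal. -/
noncomputable def diagRect (σ : ℕ → ℝ) (off a b : ℕ) : Matrix (Fin a) (Fin b) ℂ :=
  Matrix.of fun i j => if (i : ℕ) = (j : ℕ) then (σ (off + (i : ℕ)) : ℂ) else 0

/-- The first `b` columns of a matrix with `b + c` columns. -/
def colsL {a b c : ℕ} (M : Matrix (Fin a) (Fin (b + c)) ℂ) : Matrix (Fin a) (Fin b) ℂ :=
  M.submatrix id (Fin.castAdd c)

/-- The last `c` columns of a matrix with `b + c` columns. -/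
def colsR {a b c : ℕ} (M : Matrix (Fin a) (Fin (b + c)) ℂ) : Matrix (Fin a) (Fin c) ℂ :=
  M.submatrix id (Fin.natAdd b)

section Norms

open scoped Matrix.Norms.L2Operator

/-- A norm on complex matrices of all sizes that is compatible with multiplication by
operators on either side. -/
structure IsIdealNorm (N : ∀ ⦃m n : ℕ⦄, Matrix (Fin m) (Fin n) ℂ → ℝ) : Prop where
  nonneg : ∀ ⦃m n : ℕ⦄ (M : Matrix (Fin m) (Fin n) ℂ), 0 ≤ N M
  add_le : ∀ ⦃m n : ℕ⦄ (M M' : Matrix (Fin m) (Fin n) ℂ), N (M + M') ≤ N M + N M'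
  mul_le_left : ∀ ⦃l m n : ℕ⦄ (X : Matrix (Fin l) (Fin m) ℂ) (M : Matrix (Fin m) (Fin n) ℂ),
    N (X * M) ≤ ‖X‖ * N M
  mul_le_right : ∀ ⦃l m n : ℕ⦄ (M : Matrix (Fin l) (Fin m) ℂ) (X : Matrix (Fin m) (Fin n) ℂ),
    N (M * X) ≤ N M * ‖X‖

theorem isIdealNorm_l2OpNorm : IsIdealNorm fun _ _ M => ‖M‖ where
  nonneg _ _ M := norm_nonneg M
  add_le _ _ M M' := norm_add_le M M'
  mul_le_left _ _ _ X M := l2_opNorm_mul X M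
  mul_le_right _ _ _ M X := l2_opNorm_mul M X

/-- The Frobenius norm. -/
noncomputable def frob {m n : ℕ} (M : Matrix (Fin m) (Fin n) ℂ) : ℝ :=
  Real.sqrt (∑ j, ∑ i, ‖M i j‖ ^ 2)

theorem frob_conjTranspose {m n : ℕ} (M : Matrix (Fin m) (Fin n) ℂ) : frob Mᴴ = frob M := by
  unfold frob
  rw [Finset.sum_comm]
  simp

theorem frob_add_le {m n : ℕ} (M M' : Matrix (Fin m) (Fin n) ℂ) :
    frob (M + M') ≤ frob M + frob M' := by
  have key : ∀ M : Matrix (Fin m) (Fin n) ℂ,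
      frob M = ‖(WithLp.toLp 2 fun p : Fin n × Fin m => M p.2 p.1 : EuclideanSpace ℂ _)‖ := by
    intro M
    rw [EuclideanSpace.norm_eq, frob, Fintype.sum_prod_type]
  rw [key, key, key, show (WithLp.toLp 2 fun p : Fin n × Fin m => (M + M') p.2 p.1 :
      EuclideanSpace ℂ (Fin n × Fin m)) = (WithLp.toLp 2 fun p => M p.2 p.1) +
        WithLp.toLp 2 fun p => M' p.2 p.1 from rfl]
  exact norm_add_le _ _

theorem frob_mul_le_left {l m n : ℕ} (X : Matrix (Fin l) (Fin m) ℂ)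
    (M : Matrix (Fin m) (Fin n) ℂ) : frob (X * M) ≤ ‖X‖ * frob M := by
  unfold frob
  rw [← Real.sqrt_sq (norm_nonneg X), ← Real.sqrt_mul (sq_nonneg _), Finset.mul_sum]
  refine Real.sqrt_le_sqrt (Finset.sum_le_sum fun j _ => ?_)
  have h := l2_opNorm_mulVec X (WithLp.toLp 2 fun i => M i j)
  have h2 := pow_le_pow_left₀ (norm_nonneg _) h 2
  rw [mul_pow, EuclideanSpace.norm_sq_eq, EuclideanSpace.norm_sq_eq] at h2
  simpa [Matrix.mul_apply, Matrix.mulVec, dotProduct] using h2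

theorem frob_mul_le_right {l m n : ℕ} (M : Matrix (Fin l) (Fin m) ℂ)
    (X : Matrix (Fin m) (Fin n) ℂ) : frob (M * X) ≤ frob M * ‖X‖ := by
  rw [← frob_conjTranspose, conjTranspose_mul, ← frob_conjTranspose M, mul_comm,
    ← l2_opNorm_conjTranspose X]
  exact frob_mul_le_left _ _

theorem isIdealNorm_frob : IsIdealNorm fun _ _ M => frob M where
  nonneg _ _ _ := Real.sqrt_nonneg _
  add_le _ _ M M' := frob_add_le M M'
  mul_le_left _ _ _ X M := frob_mul_le_left X M
  mul_le_right _ _ _ M X := frob_mul_le_right M X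

theorem sum_getD_insertionSort (l : List ℝ) (f : ℝ → ℝ) :
    ∑ j ∈ Finset.range l.length, f ((l.insertionSort (· ≥ ·)).getD j 0) = (l.map f).sum := by
  rw [← ((List.perm_insertionSort (· ≥ ·) l).map f).sum_eq,
    ← List.length_insertionSort (· ≥ ·) l]
  generalize l.insertionSort (· ≥ ·) = s
  rw [Finset.sum_range, ← List.sum_ofFn]
  congr 1
  refine List.ext_getElem (by simp) fun i _ _ => ?_
  simp

theorem schatten_two {m n : ℕ} (M : Matrix (Fin m) (Fin n) ℂ) : schatten 2 M = frob M := by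
  open scoped ComplexOrder in
  have hM := Matrix.posSemidef_conjTranspose_mul_self M
  have h1 := sum_getD_insertionSort
    ((List.ofFn (Matrix.isHermitian_conjTranspose_mul_self M).eigenvalues).map Real.sqrt)
    (fun x => x ^ (2 : ℝ))
  rw [List.length_map, List.length_ofFn, List.map_map, List.map_ofFn (g := _ ∘ _),
    List.sum_ofFn] at h1
  have h2 : ∑ i, (Matrix.isHermitian_conjTranspose_mul_self M).eigenvalues i
      = ∑ j, ∑ i, ‖M i j‖ ^ 2 := by
    have h3 := (Matrix.isHermitian_conjTranspose_mul_self M).trace_eq_sum_eigenvalues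
    have h4 := congrArg Complex.re h3
    rw [Matrix.trace, Complex.re_sum, Complex.re_sum] at h4
    simp only [RCLike.ofReal_alg, Complex.real_smul, mul_one,
      Complex.ofReal_re] at h4
    rw [← h4]
    refine Finset.sum_congr rfl fun j _ => ?_
    rw [Matrix.diag_apply, Matrix.mul_apply, Complex.re_sum]
    refine Finset.sum_congr rfl fun i _ => ?_
    rw [Matrix.conjTranspose_apply, ← Complex.normSq_eq_norm_sq, Complex.normSq_apply]
    simp
  unfold schatten sval frob
  rw [if_neg (by simp), ← h2, Real.sqrt_eq_rpow]
  simp only [ENNReal.toReal_ofNat]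
  rw [h1]
  congr 1
  refine Finset.sum_congr rfl fun i _ => ?_
  simp [Real.sq_sqrt (hM.eigenvalues_nonneg i)]

theorem sval_zero {m n : ℕ} (M : Matrix (Fin m) (Fin n) ℂ) : sval M 0 = ‖M‖ := by
  open scoped ComplexOrder in
  have hM := Matrix.posSemidef_conjTranspose_mul_self M
  set hH := Matrix.isHermitian_conjTranspose_mul_self M
  have h1 : ‖M‖ * ‖M‖ = ‖hH.eigenvalues‖ := by
    rw [← l2_opNorm_conjTranspose_mul_self]
    conv_lhs => rw [hH.spectral_theorem, Unitary.conjStarAlgAut_apply, ← Unitary.coe_star,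
      CStarRing.norm_mul_coe_unitary, CStarRing.norm_coe_unitary_mul, l2_opNorm_diagonal]
    simp [Pi.norm_def, Function.comp_def]
  have h2 : ‖M‖ = Real.sqrt ‖hH.eigenvalues‖ := by
    rw [← h1, Real.sqrt_mul_self (norm_nonneg _)]
  rw [h2]
  unfold sval
  have hpw := List.pairwise_insertionSort (· ≥ ·) ((List.ofFn hH.eigenvalues).map Real.sqrt)
  have hmem : ∀ x, x ∈ ((List.ofFn hH.eigenvalues).map Real.sqrt).insertionSort (· ≥ ·) ↔
      ∃ i, Real.sqrt (hH.eigenvalues i) = x := by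
    intro x
    rw [List.mem_insertionSort]
    simp
  revert hpw hmem
  generalize ((List.ofFn hH.eigenvalues).map Real.sqrt).insertionSort (· ≥ ·) = s
  intro hpw hmem
  cases s with
  | nil =>
    have : IsEmpty (Fin n) := ⟨fun i => by simpa using (hmem _).2 ⟨i, rfl⟩⟩
    simp [Pi.norm_def]
  | cons a t =>
    rw [List.getD_cons_zero]
    obtain ⟨i, hi⟩ := (hmem a).1 (by simp)
    apply le_antisymm
    · rw [← hi]
      exact Real.sqrt_le_sqrt ((le_abs_self _).trans (norm_le_pi_norm hH.eigenvalues i))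
    · have ha : 0 ≤ a := hi ▸ Real.sqrt_nonneg _
      rw [Real.sqrt_le_left ha, pi_norm_le_iff_of_nonneg (sq_nonneg a)]
      intro j
      rw [Real.norm_of_nonneg (hM.eigenvalues_nonneg j), ← Real.sqrt_le_left ha]
      have := (hmem _).2 ⟨j, rfl⟩
      rcases List.mem_cons.1 this with h | h
      · exact h.le
      · exact (List.pairwise_cons.1 hpw).1 _ h

theorem schatten_top {m n : ℕ} (M : Matrix (Fin m) (Fin n) ℂ) : schatten ⊤ M = ‖M‖ := by
  rw [schatten, if_pos rfl, sval_zero]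

theorem l2OpNorm_one_le {n : ℕ} : ‖(1 : Matrix (Fin n) (Fin n) ℂ)‖ ≤ 1 := by
  rw [← diagonal_one, l2_opNorm_diagonal, pi_norm_le_iff_of_nonneg zero_le_one]
  simp

theorem l2OpNorm_le_one_of_isometry {m n : ℕ} {M : Matrix (Fin m) (Fin n) ℂ}
    (h : Mᴴ * M = 1) : ‖M‖ ≤ 1 := by
  have h1 := l2_opNorm_conjTranspose_mul_self M
  rw [h] at h1
  have h2 := l2OpNorm_one_le (n := n)
  nlinarith [norm_nonneg M]

theorem l2OpNorm_one_sub_le_one {m n : ℕ} {M : Matrix (Fin m) (Fin n) ℂ}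
    (h : Mᴴ * M = 1) : ‖1 - M * Mᴴ‖ ≤ 1 := by
  have h1 := l2_opNorm_conjTranspose_mul_self (1 - M * Mᴴ)
  have h2 : (1 - M * Mᴴ)ᴴ * (1 - M * Mᴴ) = 1 - M * Mᴴ := by
    have : M * Mᴴ * (M * Mᴴ) = M * Mᴴ := by
      rw [Matrix.mul_assoc, ← Matrix.mul_assoc Mᴴ, h, Matrix.one_mul]
    simp [Matrix.sub_mul, Matrix.mul_sub, this]
  rw [h2] at h1
  nlinarith [norm_nonneg (1 - M * Mᴴ)]

theorem l2OpNorm_pow_le {n : ℕ} (M : Matrix (Fin n) (Fin n) ℂ) (j : ℕ) : ‖M ^ j‖ ≤ ‖M‖ ^ j := by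
  induction j with
  | zero => simpa using l2OpNorm_one_le
  | succ j ih =>
    rw [pow_succ, pow_succ]
    exact (l2_opNorm_mul _ _).trans (mul_le_mul_of_nonneg_right ih (norm_nonneg _))

theorem diagRect_square (σ : ℕ → ℝ) (off a : ℕ) :
    diagRect σ off a a = diagonal fun i : Fin a => (σ (off + i) : ℂ) := by
  ext i j
  simp [diagRect, diagonal_apply, Fin.ext_iff]

theorem conjTranspose_diagRect (σ : ℕ → ℝ) (off a b : ℕ) :
    (diagRect σ off a b)ᴴ = diagRect σ off b a := by
  ext i j
  by_cases h : (j : ℕ) = i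
  · simp [diagRect, h]
  · simp [diagRect, h, Ne.symm h]

theorem l2OpNorm_diagRect_le {σ : ℕ → ℝ} {off a b : ℕ} {c : ℝ} (hc : 0 ≤ c)
    (h : ∀ i < b, |σ (off + i)| ≤ c) : ‖diagRect σ off a b‖ ≤ c := by
  have h1 : (diagRect σ off a b)ᴴ * diagRect σ off a b =
      diagonal fun j : Fin b => if (j : ℕ) < a then ((σ (off + j) : ℂ)) ^ 2 else 0 := by
    ext i j
    rw [conjTranspose_diagRect, mul_apply, diagonal_apply]
    simp only [diagRect, of_apply]
    by_cases hi : (i : ℕ) < a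
    · rw [Finset.sum_eq_single ⟨i, hi⟩]
      · by_cases hij : i = j
        · subst hij
          simp [hi, sq]
        · have : (i : ℕ) ≠ j := fun h => hij (Fin.ext h)
          simp [hij, this]
      · intro x _ hx
        have : (i : ℕ) ≠ x := fun h => hx (Fin.ext h.symm)
        simp [this]
      · simp
    · rw [Finset.sum_eq_zero]
      · simp [hi]
      · intro x _
        have : (i : ℕ) ≠ x := fun h => hi (h ▸ x.2)
        simp [this]
  have h2 := l2_opNorm_conjTranspose_mul_self (diagRect σ off a b)
  rw [h1, l2_opNorm_diagonal] at h2
  refine abs_le_of_sq_le_sq' ?_ hc |>.2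
  rw [sq, ← h2, pi_norm_le_iff_of_nonneg (sq_nonneg c)]
  intro j
  split_ifs
  · rw [norm_pow, Complex.norm_real]
    exact pow_le_pow_left₀ (norm_nonneg _) (h j j.2) 2
  · simpa using sq_nonneg c

theorem diagRect_mul_diagRect_inv {σ : ℕ → ℝ} {a : ℕ} (h : ∀ i < a, σ i ≠ 0) :
    diagRect σ 0 a a * diagRect (fun i => (σ i)⁻¹) 0 a a = 1 := by
  rw [diagRect_square, diagRect_square, diagonal_mul_diagonal, ← diagonal_one]
  congr 1
  ext i
  simpa using mul_inv_cancel₀ (Complex.ofReal_ne_zero.2 (h i i.2))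

theorem colsL_mul_diagRect {l k a b : ℕ} (σ : ℕ → ℝ) (M : Matrix (Fin l) (Fin (k + a)) ℂ) :
    colsL (M * diagRect σ 0 (k + a) (k + b)) = colsL M * diagRect σ 0 k k := by
  ext i j
  simp only [colsL, submatrix_apply, id, mul_apply, diagRect, of_apply, Fin.sum_univ_add]
  rw [Finset.sum_eq_zero (s := (Finset.univ : Finset (Fin a)))]
  · simp
  · intro x _
    have : k + (x : ℕ) ≠ j := by omega
    simp [this]

theorem colsR_mul_diagRect {l k a b : ℕ} (σ : ℕ → ℝ) (M : Matrix (Fin l) (Fin (k + a)) ℂ) :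
    colsR (M * diagRect σ 0 (k + a) (k + b)) = colsR M * diagRect σ k a b := by
  ext i j
  simp only [colsR, submatrix_apply, id, mul_apply, diagRect, of_apply, Fin.sum_univ_add]
  rw [Finset.sum_eq_zero (s := (Finset.univ : Finset (Fin k)))]
  · simp
  · intro x _
    have : (x : ℕ) ≠ k + j := by omega
    simp [this]

theorem mul_conjTranspose_eq_cols {l l' k a : ℕ} (M : Matrix (Fin l) (Fin (k + a)) ℂ)
    (M' : Matrix (Fin l') (Fin (k + a)) ℂ) :
    M * M'ᴴ = colsL M * (colsL M')ᴴ + colsR M * (colsR M')ᴴ := by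
  ext i j
  simp [colsL, colsR, mul_apply, Fin.sum_univ_add]

theorem mul_diagRect_mul_eq_cols {l l' k a b : ℕ} (σ : ℕ → ℝ)
    (M : Matrix (Fin l) (Fin (k + a)) ℂ) (M' : Matrix (Fin l') (Fin (k + b)) ℂ) :
    M * diagRect σ 0 (k + a) (k + b) * M'ᴴ =
      colsL M * diagRect σ 0 k k * (colsL M')ᴴ + colsR M * diagRect σ k a b * (colsR M')ᴴ := by
  rw [mul_conjTranspose_eq_cols, colsL_mul_diagRect, colsR_mul_diagRect]

theorem conjTranspose_colsL_mul_colsL {l k a : ℕ} {M : Matrix (Fin l) (Fin (k + a)) ℂ}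
    (h : Mᴴ * M = 1) : (colsL M)ᴴ * colsL M = 1 := by
  have : (colsL M)ᴴ * colsL M = (Mᴴ * M).submatrix (Fin.castAdd a) (Fin.castAdd a) := rfl
  rw [this, h]
  exact submatrix_one _ (Fin.castAdd_injective _ _)

theorem conjTranspose_colsR_mul_colsR {l k a : ℕ} {M : Matrix (Fin l) (Fin (k + a)) ℂ}
    (h : Mᴴ * M = 1) : (colsR M)ᴴ * colsR M = 1 := by
  have : (colsR M)ᴴ * colsR M = (Mᴴ * M).submatrix (Fin.natAdd k) (Fin.natAdd k) := rfl
  rw [this, h]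
  exact submatrix_one _ (Fin.natAdd_injective _ _)

theorem conjTranspose_colsL_mul_colsR {l k a : ℕ} {M : Matrix (Fin l) (Fin (k + a)) ℂ}
    (h : Mᴴ * M = 1) : (colsL M)ᴴ * colsR M = 0 := by
  have : (colsL M)ᴴ * colsR M = (Mᴴ * M).submatrix (Fin.castAdd a) (Fin.natAdd k) := rfl
  rw [this, h]
  ext i j
  rw [submatrix_apply, one_apply_ne]
  · rfl
  · intro h
    have := congrArg Fin.val h
    simp only [Fin.val_castAdd, Fin.val_natAdd] at this
    omega

theorem conjTranspose_colsR_mul_colsL {l k a : ℕ} {M : Matrix (Fin l) (Fin (k + a)) ℂ}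
    (h : Mᴴ * M = 1) : (colsR M)ᴴ * colsL M = 0 := by
  have := congrArg conjTranspose (conjTranspose_colsL_mul_colsR h)
  simpa using this

theorem mul_rpinv_cancel {a b : ℕ} {M : Matrix (Fin a) (Fin b) ℂ} (h : M.rank = a) :
    M * rpinv M = 1 := by
  open scoped ComplexOrder in
  have h1 : (M * Mᴴ).rank = a := by rw [rank_self_mul_conjTranspose, h]
  have h2 : IsUnit (M * Mᴴ) := by
    rw [← mulVec_surjective_iff_isUnit]
    exact LinearMap.range_eq_top.1 (Submodule.eq_top_of_finrank_eq (h1.trans (by simp)) :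
      LinearMap.range (M * Mᴴ).mulVecLin = ⊤)
  rw [rpinv, ← Matrix.mul_assoc]
  exact mul_nonsing_inv _ ((isUnit_iff_isUnit_det _).1 h2)

/-- The `k`-th singular value is a lower bound for the error of an approximation of rank at
most `k`. -/
theorem singularValue_le_l2OpNorm_of_eq_add {k r n : ℕ} (hkr : k < r) {σ : ℕ → ℝ}
    (hσ0 : ∀ i, 0 ≤ σ i) (hσm : ∀ i j, i ≤ j → σ j ≤ σ i)
    {U : Matrix (Fin r) (Fin r) ℂ} {V : Matrix (Fin n) (Fin r) ℂ}
    (hU : Uᴴ * U = 1) (hV : Vᴴ * V = 1)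
    {Z : Matrix (Fin r) (Fin k) ℂ} {W : Matrix (Fin k) (Fin n) ℂ} {E : Matrix (Fin r) (Fin n) ℂ}
    (h : U * diagRect σ 0 r r * Vᴴ = Z * W + E) : σ k ≤ ‖E‖ := by
  rcases (hσ0 k).eq_or_lt with h0 | h0
  · rw [← h0]
    exact norm_nonneg _
  have hpos : ∀ i < k + 1, 0 < σ i := fun i hi => h0.trans_le (hσm i k (by omega))
  set J : Matrix (Fin r) (Fin (k + 1)) ℂ :=
    (1 : Matrix (Fin r) (Fin r) ℂ).submatrix id (Fin.castLE hkr) with hJ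
  have hJJ : Jᴴ * J = 1 := by
    have : Jᴴ * J = ((1 : Matrix (Fin r) (Fin r) ℂ)ᴴ * 1).submatrix (Fin.castLE hkr)
      (Fin.castLE hkr) := rfl
    rw [this, conjTranspose_one, Matrix.one_mul]
    exact submatrix_one _ (Fin.castLE_injective hkr)
  have hJD : Jᴴ * diagRect σ 0 r r * J = diagRect σ 0 (k + 1) (k + 1) := by
    have : Jᴴ * diagRect σ 0 r r * J = ((1 : Matrix (Fin r) (Fin r) ℂ)ᴴ * diagRect σ 0 r r *
      1).submatrix (Fin.castLE hkr) (Fin.castLE hkr) := rfl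
    rw [this, conjTranspose_one, Matrix.one_mul, Matrix.mul_one]
    ext i j
    simp [diagRect]
  obtain ⟨c, hc, hc0⟩ : ∃ c : Fin (k + 1) → ℂ, (W * V * J) *ᵥ c = 0 ∧ c ≠ 0 := by
    have := LinearMap.ker_ne_bot_of_finrank_lt (f := (W * V * J).mulVecLin) (by simp)
    obtain ⟨c, hc, hc0⟩ := Submodule.exists_mem_ne_zero_of_ne_bot this
    exact ⟨c, LinearMap.mem_ker.1 hc, hc0⟩
  set C : Matrix (Fin (k + 1)) (Fin 1) ℂ := replicateCol (Fin 1) c with hC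
  have hC0 : 0 < ‖C‖ := by
    rw [norm_pos_iff]
    simpa [hC] using hc0
  have hWC : W * (V * (J * C)) = 0 := by
    rw [← Matrix.mul_assoc, ← Matrix.mul_assoc, hC, ← replicateCol_mulVec, hc,
      replicateCol_zero]
  set T := diagRect (fun i => (σ i)⁻¹) 0 (k + 1) (k + 1)
  have hT : ‖T‖ ≤ (σ k)⁻¹ := by
    refine l2OpNorm_diagRect_le (inv_nonneg.2 h0.le) fun i hi => ?_
    rw [Nat.zero_add, abs_of_nonneg (inv_nonneg.2 (hσ0 i))]
    exact inv_anti₀ h0 (hσm i k (by omega))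
  have hTD : T * diagRect σ 0 (k + 1) (k + 1) = 1 :=
    mul_eq_one_comm.1 (diagRect_mul_diagRect_inv fun i hi => (hpos i hi).ne')
  have key : C = T * (Jᴴ * (Uᴴ * (E * (V * (J * C))))) := by
    have h1 : E * (V * (J * C)) = U * diagRect σ 0 r r * Vᴴ * (V * (J * C)) := by
      rw [h, Matrix.add_mul, Matrix.mul_assoc Z, hWC, Matrix.mul_zero, zero_add]
    have h2 : Uᴴ * (U * diagRect σ 0 r r * Vᴴ * (V * (J * C))) =
        (Uᴴ * U) * diagRect σ 0 r r * ((Vᴴ * V) * (J * C)) := by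
      simp only [Matrix.mul_assoc]
    rw [h1, h2, hU, hV, Matrix.one_mul, Matrix.one_mul, ← Matrix.mul_assoc Jᴴ,
      ← Matrix.mul_assoc _ J, hJD, ← Matrix.mul_assoc, hTD, Matrix.one_mul]
  have hJn := l2OpNorm_le_one_of_isometry hJJ
  have hUn := l2OpNorm_le_one_of_isometry hU
  have hVn := l2OpNorm_le_one_of_isometry hV
  have step : ‖C‖ ≤ (σ k)⁻¹ * (1 * (1 * (‖E‖ * (1 * (1 * ‖C‖))))) := by
    nth_rw 1 [key]
    refine (l2_opNorm_mul _ _).trans (mul_le_mul hT ?_ (norm_nonneg _) (inv_nonneg.2 h0.le))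
    refine (l2_opNorm_mul _ _).trans (mul_le_mul ?_ ?_ (norm_nonneg _) zero_le_one)
    · rwa [l2_opNorm_conjTranspose]
    refine (l2_opNorm_mul _ _).trans (mul_le_mul ?_ ?_ (norm_nonneg _) zero_le_one)
    · rwa [l2_opNorm_conjTranspose]
    refine (l2_opNorm_mul _ _).trans (mul_le_mul_of_nonneg_left ?_ (norm_nonneg _))
    refine (l2_opNorm_mul _ _).trans (mul_le_mul hVn ?_ (norm_nonneg _) zero_le_one)
    exact (l2_opNorm_mul _ _).trans (mul_le_mul_of_nonneg_right hJn (norm_nonneg _))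
  simp only [one_mul] at step
  rw [inv_mul_eq_div, le_div_iff₀ h0, mul_comm] at step
  exact le_of_mul_le_mul_right step hC0

namespace IsIdealNorm

variable {N : ∀ ⦃m n : ℕ⦄, Matrix (Fin m) (Fin n) ℂ → ℝ}

theorem mul_le_left_of_le (hN : IsIdealNorm N) {l m n : ℕ} {X : Matrix (Fin l) (Fin m) ℂ} {c : ℝ}
    (hX : ‖X‖ ≤ c) (M : Matrix (Fin m) (Fin n) ℂ) : N (X * M) ≤ c * N M :=
  (hN.mul_le_left X M).trans (mul_le_mul_of_nonneg_right hX (hN.nonneg M))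

theorem mul_le_right_of_le (hN : IsIdealNorm N) {l m n : ℕ} {X : Matrix (Fin m) (Fin n) ℂ} {c : ℝ}
    (hX : ‖X‖ ≤ c) (M : Matrix (Fin l) (Fin m) ℂ) : N (M * X) ≤ N M * c :=
  (hN.mul_le_right M X).trans (mul_le_mul_of_nonneg_left hX (hN.nonneg M))

/-- A perturbation bound for singular subspaces: the distance between the dominant left singular
subspace `range U` of `A` and the left singular subspace `range P'` of `P * A` is controlled by the
distance of `U` to the range of the projection `P`. -/
theorem one_sub_mul_singularVectors_le (hN : IsIdealNorm N) {m n k : ℕ}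
    {A : Matrix (Fin m) (Fin n) ℂ}
    {U : Matrix (Fin m) (Fin k) ℂ} {V : Matrix (Fin n) (Fin k) ℂ} {S T : Matrix (Fin k) (Fin k) ℂ}
    {P P' : Matrix (Fin m) (Fin m) ℂ} {P'' : Matrix (Fin n) (Fin n) ℂ} {a s g : ℝ}
    (hs : 0 < s) (hg : 0 ≤ g) (hgs : g < s) (has : s ≤ a)
    (hAV : A * V = U * S) (hAU : Aᴴ * U = V * S)
    (hST : S * T = 1) (hT : ‖T‖ ≤ s⁻¹) (hA : ‖A‖ ≤ a)
    (hPH : Pᴴ = P) (hPH' : P'ᴴ = P') (hPH'' : P''ᴴ = P'')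
    (hPn'' : ‖1 - P''‖ ≤ 1)
    (hPP : P' * P = P') (hPP' : P' * P' = P') (hPP'' : P'' * P'' = P'')
    (hcomm : P' * (P * A) = P * A * P'') (hrest : ‖(1 - P') * (P * A)‖ ≤ g) :
    N ((1 - P') * U * S) ≤ a / s / (1 - g / s) * N ((1 - P) * U * S) := by
  set X := (1 - P') * U * S with hX
  set E := (1 - P) * U * S with hE
  set Z := (1 - P'') * V with hZ
  set L := (1 - P') * (P * A) with hL
  have hL' : L = P * A * (1 - P'') := by
    rw [hL, Matrix.sub_mul, Matrix.mul_sub, hcomm, Matrix.one_mul, Matrix.mul_one]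
  have hLr : L * (1 - P'') = L := by
    rw [hL', Matrix.mul_assoc, Matrix.mul_sub (1 - P''), Matrix.sub_mul 1 P'' P'', hPP'']
    simp
  have hLl : (1 - P') * L = L := by
    rw [hL, ← Matrix.mul_assoc, Matrix.mul_sub (1 - P'), Matrix.sub_mul 1 P' P', hPP']
    simp
  have eX : X = E + L * Z := by
    have h1 : (1 - P') * (1 - P) = 1 - P := by
      rw [Matrix.sub_mul, Matrix.mul_sub P', hPP]
      simp
    have h2 : X = (1 - P') * (1 - P) * (A * V) + (1 - P') * (P * A) * V := by
      rw [hX, Matrix.mul_assoc, ← hAV]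
      simp only [Matrix.mul_assoc]
      rw [← Matrix.mul_add, ← Matrix.add_mul]
      simp
    rw [h2, h1, hAV, hE, hZ, ← Matrix.mul_assoc L, hLr, Matrix.mul_assoc _ U]
  have hE' : E * T = (1 - P) * U := by rw [hE, Matrix.mul_assoc, hST, Matrix.mul_one]
  have hX' : X * T = (1 - P') * U := by rw [hX, Matrix.mul_assoc, hST, Matrix.mul_one]
  have eZ : Z = ((1 - P'') * (Aᴴ * (E * T)) + Lᴴ * (X * T)) * T := by
    have h1 : Z = Z * S * T := by rw [Matrix.mul_assoc, hST, Matrix.mul_one]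
    rw [h1]
    congr 1
    have h2 : Lᴴ * ((1 - P') * U) = Lᴴ * U := by
      have h := congrArg conjTranspose hLl
      rw [conjTranspose_mul, conjTranspose_sub, hPH', conjTranspose_one] at h
      rw [← Matrix.mul_assoc, h]
    have h3 : Lᴴ = (1 - P'') * (Aᴴ * P) := by
      rw [hL', conjTranspose_mul, conjTranspose_mul, hPH, conjTranspose_sub, hPH'',
        conjTranspose_one]
    rw [hE', hX', h2, h3, hZ, Matrix.mul_assoc, ← hAU]
    simp only [Matrix.mul_assoc]
    rw [← Matrix.mul_add, ← Matrix.mul_add, ← Matrix.add_mul]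
    simp
  have ha : 0 ≤ a := hs.le.trans has
  have nX : N X ≤ N E + g * N Z := by
    rw [eX]
    exact (hN.add_le _ _).trans (add_le_add le_rfl (hN.mul_le_left_of_le hrest Z))
  have nZ : N Z ≤ (1 * (a * (N E * s⁻¹)) + g * (N X * s⁻¹)) * s⁻¹ := by
    rw [eZ]
    refine (hN.mul_le_right_of_le hT _).trans
      (mul_le_mul_of_nonneg_right ?_ (inv_nonneg.2 hs.le))
    refine (hN.add_le _ _).trans (add_le_add ?_ ?_)
    · refine (hN.mul_le_left_of_le hPn'' _).trans (mul_le_mul_of_nonneg_left ?_ zero_le_one)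
      refine (hN.mul_le_left_of_le (c := a) (by rwa [l2_opNorm_conjTranspose]) _).trans
        (mul_le_mul_of_nonneg_left ?_ ha)
      exact hN.mul_le_right_of_le hT _
    · refine (hN.mul_le_left_of_le (c := g) (by rwa [l2_opNorm_conjTranspose]) _).trans
        (mul_le_mul_of_nonneg_left ?_ hg)
      exact hN.mul_le_right_of_le hT _
  have hγ : g / s < 1 := (div_lt_one hs).2 hgs
  have hγ0 : 0 ≤ g / s := div_nonneg hg hs.le
  have hα : 1 ≤ a / s := (one_le_div hs).2 has
  have nZ' : g * N Z ≤ g / s * (a / s) * N E + (g / s) ^ 2 * N X :=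
    (mul_le_mul_of_nonneg_left nZ hg).trans_eq (by field_simp)
  rw [div_mul_eq_mul_div, le_div_iff₀ (by linarith)]
  have hE0 := hN.nonneg E
  have : N X * (1 - g / s) * (1 + g / s) ≤ a / s * N E * (1 + g / s) := by
    nlinarith [mul_le_mul_of_nonneg_right hα hE0]
  exact le_of_mul_le_mul_right this (by linarith)

/-- The distance of the dominant left singular subspace to the range of a projection that fixes
the range of `(A * Aᴴ) ^ q * A * Ω`. -/
theorem one_sub_mul_singularVectors_le_of_powerIteration (hN : IsIdealNorm N)
    {m n k m₂ n₂ r : ℕ} (q : ℕ) {A : Matrix (Fin m) (Fin n) ℂ}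
    {U : Matrix (Fin m) (Fin k) ℂ} {V : Matrix (Fin n) (Fin k) ℂ} {S T : Matrix (Fin k) (Fin k) ℂ}
    {U' : Matrix (Fin m) (Fin m₂) ℂ} {V' : Matrix (Fin n) (Fin n₂) ℂ}
    {D : Matrix (Fin m₂) (Fin n₂) ℂ} {Ω : Matrix (Fin n) (Fin r) ℂ}
    {Ω' : Matrix (Fin r) (Fin k) ℂ} {P : Matrix (Fin m) (Fin m) ℂ} {s g : ℝ}
    (hg : 0 ≤ g)
    (hAV : A * V = U * S) (hAU : Aᴴ * U = V * S) (hAV' : A * V' = U' * D)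
    (hAU' : Aᴴ * U' = V' * Dᴴ) (hVV : V * Vᴴ + V' * V'ᴴ = 1) (hU' : ‖U'‖ ≤ 1)
    (hST : S * T = 1) (hT : ‖T‖ ≤ s⁻¹) (hD : ‖D‖ ≤ g) (hΩ : Vᴴ * Ω * Ω' = 1)
    (hPn : ‖1 - P‖ ≤ 1) (hP : (1 - P) * ((A * Aᴴ) ^ q * A * Ω) = 0) :
    N ((1 - P) * U * S) ≤ (g / s) ^ (2 * q) * ‖V'ᴴ * Ω * Ω'‖ * N D := by
  set M := V'ᴴ * Ω * Ω' with hM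
  have hpow : ∀ j : ℕ, (A * Aᴴ) ^ j * U = U * (S * S) ^ j ∧
      (A * Aᴴ) ^ j * U' = U' * (D * Dᴴ) ^ j := by
    intro j
    induction j with
    | zero => simp
    | succ j ih =>
      constructor
      · rw [pow_succ, pow_succ', Matrix.mul_assoc, Matrix.mul_assoc A, hAU, ← Matrix.mul_assoc A,
          hAV, Matrix.mul_assoc U, ← Matrix.mul_assoc _ U, ih.1, Matrix.mul_assoc U,
          ← pow_succ, ← pow_succ']
      · rw [pow_succ, pow_succ', Matrix.mul_assoc, Matrix.mul_assoc A, hAU', ← Matrix.mul_assoc A,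
          hAV', Matrix.mul_assoc U', ← Matrix.mul_assoc _ U', ih.2, Matrix.mul_assoc U',
          ← pow_succ, ← pow_succ']
  have hST2 : S * (S * S) ^ q * T ^ (2 * q) = S := by
    have hc : Commute S T := hST.trans (mul_eq_one_comm.1 hST).symm
    rw [← sq, ← pow_mul, Matrix.mul_assoc, ← hc.mul_pow, hST, one_pow, Matrix.mul_one]
  have hΩ' : Ω * Ω' = V + V' * M := by
    rw [hM, Matrix.mul_assoc V'ᴴ, ← Matrix.mul_assoc V']
    rw [Matrix.mul_assoc] at hΩ
    calc Ω * Ω' = V * (Vᴴ * (Ω * Ω')) + V' * V'ᴴ * (Ω * Ω') := by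
          rw [← Matrix.mul_assoc V, ← Matrix.add_mul, hVV, Matrix.one_mul]
      _ = _ := by rw [hΩ, Matrix.mul_one]
  have hY : (A * Aᴴ) ^ q * A * Ω * (Ω' * T ^ (2 * q)) =
      U * S + U' * ((D * Dᴴ) ^ q * (D * (M * T ^ (2 * q)))) := by
    calc _ = (A * Aᴴ) ^ q * (A * (Ω * Ω')) * T ^ (2 * q) := by simp only [Matrix.mul_assoc]
      _ = ((A * Aᴴ) ^ q * U * S + (A * Aᴴ) ^ q * U' * (D * M)) * T ^ (2 * q) := by
        rw [hΩ', Matrix.mul_add A, hAV, ← Matrix.mul_assoc A, hAV']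
        simp only [Matrix.mul_add, Matrix.mul_assoc]
      _ = _ := by
        rw [(hpow q).1, (hpow q).2, Matrix.add_mul]
        congr 1
        · have hc : (S * S) ^ q * S = S * (S * S) ^ q :=
            (((Commute.refl S).mul_left (Commute.refl S)).pow_left q).eq
          rw [Matrix.mul_assoc U, hc, Matrix.mul_assoc U, hST2]
        · simp only [Matrix.mul_assoc]
  have hE : (1 - P) * U * S =
      (-1 : Matrix (Fin m) (Fin m) ℂ) *
        ((1 - P) * (U' * ((D * Dᴴ) ^ q * (D * (M * T ^ (2 * q)))))) := by
    have h0 : (1 - P) * ((A * Aᴴ) ^ q * A * Ω * (Ω' * T ^ (2 * q))) = 0 := by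
      rw [← Matrix.mul_assoc, hP, Matrix.zero_mul]
    rw [hY, Matrix.mul_add, ← Matrix.mul_assoc _ U] at h0
    rw [eq_neg_of_add_eq_zero_left h0, Matrix.neg_mul, Matrix.one_mul]
  have hDD : ‖(D * Dᴴ) ^ q‖ ≤ (g * g) ^ q := by
    refine (l2OpNorm_pow_le _ _).trans (pow_le_pow_left₀ (norm_nonneg _) ?_ q)
    refine (l2_opNorm_mul _ _).trans ?_
    rw [l2_opNorm_conjTranspose]
    exact mul_le_mul hD hD (norm_nonneg _) hg
  have hTT : ‖T ^ (2 * q)‖ ≤ s⁻¹ ^ (2 * q) :=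
    (l2OpNorm_pow_le _ _).trans (pow_le_pow_left₀ (norm_nonneg _) hT _)
  have hone : ‖(-1 : Matrix (Fin m) (Fin m) ℂ)‖ ≤ 1 := by
    rw [norm_neg]
    exact l2OpNorm_one_le
  rw [hE]
  calc _ ≤ 1 * (1 * (1 * ((g * g) ^ q * (N D * (‖M‖ * s⁻¹ ^ (2 * q)))))) := by
        refine (hN.mul_le_left_of_le hone _).trans (mul_le_mul_of_nonneg_left ?_ zero_le_one)
        refine (hN.mul_le_left_of_le hPn _).trans (mul_le_mul_of_nonneg_left ?_ zero_le_one)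
        refine (hN.mul_le_left_of_le hU' _).trans (mul_le_mul_of_nonneg_left ?_ zero_le_one)
        refine (hN.mul_le_left_of_le hDD _).trans
          (mul_le_mul_of_nonneg_left ?_ (pow_nonneg (mul_nonneg hg hg) q))
        refine hN.mul_le_right_of_le ?_ _
        exact (l2_opNorm_mul _ _).trans (mul_le_mul_of_nonneg_left hTT (norm_nonneg _))
    _ = _ := by
        rw [div_pow, pow_mul g, sq, inv_pow]
        ring

/-- The error bound for the truncated approximation, for any ideal norm. -/
theorem lowrank_error_truncated_le (hN : IsIdealNorm N)
    {k m₂ n₂ ρ : ℕ} (q : ℕ) (hk : 1 ≤ k)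
    {A : Matrix (Fin (k + m₂)) (Fin (k + n₂)) ℂ}
    {U : Matrix (Fin (k + m₂)) (Fin (k + m₂)) ℂ}
    {V : Matrix (Fin (k + n₂)) (Fin (k + n₂)) ℂ}
    {σ : ℕ → ℝ}
    (hU : Uᴴ * U = 1) (hV : Vᴴ * V = 1) (hV' : V * Vᴴ = 1)
    (hσ0 : ∀ i, 0 ≤ σ i) (hσm : ∀ i j, i ≤ j → σ j ≤ σ i)
    (hA : A = U * diagRect σ 0 (k + m₂) (k + n₂) * Vᴴ)
    (hrank : 0 < σ (k - 1)) (hgap : σ k < σ (k - 1))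
    {Ω : Matrix (Fin (k + n₂)) (Fin (k + ρ)) ℂ}
    (hΩ : ((colsL V)ᴴ * Ω).rank = k)
    {Q : Matrix (Fin (k + m₂)) (Fin (k + ρ)) ℂ}
    {R : Matrix (Fin (k + ρ)) (Fin (k + ρ)) ℂ}
    (hQ : Qᴴ * Q = 1)
    (hQR : (A * Aᴴ) ^ q * A * Ω = Q * R)
    {UB : Matrix (Fin (k + ρ)) (Fin (k + ρ)) ℂ}
    {Vh : Matrix (Fin (k + n₂)) (Fin (k + ρ)) ℂ}
    {σh : ℕ → ℝ}
    (hUB : UBᴴ * UB = 1) (hVh : Vhᴴ * Vh = 1)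
    (hσh0 : ∀ i, 0 ≤ σh i) (hσhm : ∀ i j, i ≤ j → σh j ≤ σh i)
    (hB : Qᴴ * A = UB * diagRect σh 0 (k + ρ) (k + ρ) * Vhᴴ) :
    N (A - Q * (colsL UB * diagRect σh 0 k k * (colsL Vh)ᴴ)) ≤
      (1 + σ 0 / σ (k - 1) * ((σ k / σ (k - 1)) ^ (2 * q) / (1 - (σ k / σ (k - 1)))) *
        ‖(colsR V)ᴴ * Ω * rpinv ((colsL V)ᴴ * Ω)‖) * N (diagRect σ k m₂ n₂) := by
  have hUL := conjTranspose_colsL_mul_colsL hU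
  have hUR := conjTranspose_colsR_mul_colsR hU
  have hULR := conjTranspose_colsL_mul_colsR hU
  have hURL := conjTranspose_colsR_mul_colsL hU
  have hVL := conjTranspose_colsL_mul_colsL hV
  have hVR := conjTranspose_colsR_mul_colsR hV
  have hVLR := conjTranspose_colsL_mul_colsR hV
  have hVRL := conjTranspose_colsR_mul_colsL hV
  have hBL := conjTranspose_colsL_mul_colsL hUB
  have hBR := conjTranspose_colsR_mul_colsR hUB
  have hBLR := conjTranspose_colsL_mul_colsR hUB
  have hhL := conjTranspose_colsL_mul_colsL hVh
  have hhR := conjTranspose_colsR_mul_colsR hVh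
  have hhRL := conjTranspose_colsR_mul_colsL hVh
  have hVV := hV'
  rw [mul_conjTranspose_eq_cols] at hVV
  have hA' := hA
  rw [mul_diagRect_mul_eq_cols] at hA'
  have hB' := hB
  rw [mul_diagRect_mul_eq_cols] at hB'
  have hSH := conjTranspose_diagRect σ 0 k k
  have hST : diagRect σ 0 k k * diagRect (fun i => (σ i)⁻¹) 0 k k = 1 :=
    diagRect_mul_diagRect_inv fun i hi => (hrank.trans_le (hσm i _ (by omega))).ne'
  have hT : ‖diagRect (fun i => (σ i)⁻¹) 0 k k‖ ≤ (σ (k - 1))⁻¹ := by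
    refine l2OpNorm_diagRect_le (inv_nonneg.2 hrank.le) fun i hi => ?_
    rw [Nat.zero_add, abs_of_nonneg (inv_nonneg.2 (hσ0 i))]
    exact inv_anti₀ hrank (hσm i _ (by omega))
  have hD : ‖diagRect σ k m₂ n₂‖ ≤ σ k := l2OpNorm_diagRect_le (hσ0 k) fun i _ => by
    rw [abs_of_nonneg (hσ0 _)]
    exact hσm _ _ (by omega)
  have hVn := l2OpNorm_le_one_of_isometry hV
  have hUn := l2OpNorm_le_one_of_isometry hU
  have hVLn := l2OpNorm_le_one_of_isometry hVL
  have hURn := l2OpNorm_le_one_of_isometry hUR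
  have hVRn := l2OpNorm_le_one_of_isometry hVR
  have hQn := l2OpNorm_le_one_of_isometry hQ
  have hBRn := l2OpNorm_le_one_of_isometry hBR
  have hhRn := l2OpNorm_le_one_of_isometry hhR
  have hAn : ‖A‖ ≤ σ 0 := by
    have h1 : ‖diagRect σ 0 (k + m₂) (k + n₂)‖ ≤ σ 0 := l2OpNorm_diagRect_le (hσ0 0) fun i _ => by
      rw [abs_of_nonneg (hσ0 _)]
      exact hσm _ _ (by omega)
    rw [hA]
    calc _ ≤ 1 * σ 0 * 1 := by
          refine (l2_opNorm_mul _ _).trans (mul_le_mul ((l2_opNorm_mul _ _).trans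
            (mul_le_mul hUn h1 (norm_nonneg _) zero_le_one)) ?_ (norm_nonneg _)
            (by simpa using hσ0 0))
          rwa [l2_opNorm_conjTranspose]
      _ = σ 0 := by ring
  have hρ : ‖diagRect σh k ρ ρ‖ ≤ σ k := by
    refine l2OpNorm_diagRect_le (hσ0 k) fun i hi => ?_
    rw [abs_of_nonneg (hσh0 _)]
    refine (hσhm k _ (by omega)).trans ?_
    have h1 : UB * diagRect σh 0 (k + ρ) (k + ρ) * Vhᴴ =
        (Qᴴ * colsL U * diagRect σ 0 k k) * (colsL V)ᴴ +
          Qᴴ * (colsR U * (diagRect σ k m₂ n₂ * (colsR V)ᴴ)) := by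
      rw [← hB, hA', Matrix.mul_add]
      simp only [Matrix.mul_assoc]
    refine (singularValue_le_l2OpNorm_of_eq_add (by omega) hσh0 hσhm hUB hVh h1).trans ?_
    calc _ ≤ 1 * (1 * (σ k * 1)) := by
          refine (l2_opNorm_mul _ _).trans (mul_le_mul ?_ ?_ (norm_nonneg _) zero_le_one)
          · rwa [l2_opNorm_conjTranspose]
          refine (l2_opNorm_mul _ _).trans (mul_le_mul hURn ?_ (norm_nonneg _) zero_le_one)
          refine (l2_opNorm_mul _ _).trans (mul_le_mul hD ?_ (norm_nonneg _) (hσ0 k))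
          rwa [l2_opNorm_conjTranspose]
      _ = σ k := by ring
  set UL := colsL U
  set UR := colsR U
  set VL := colsL V
  set VR := colsR V
  set BL := colsL UB
  set BR := colsR UB
  set hL := colsL Vh
  set hR := colsR Vh
  set S := diagRect σ 0 k k
  set T := diagRect (fun i => (σ i)⁻¹) 0 k k
  set D := diagRect σ k m₂ n₂
  set Sh := diagRect σh 0 k k
  set Dh := diagRect σh k ρ ρ
  have hAV : A * VL = UL * S := by
    rw [hA', Matrix.add_mul, Matrix.mul_assoc _ VLᴴ, Matrix.mul_assoc _ VRᴴ, hVL, hVRL]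
    simp
  have hAV' : A * VR = UR * D := by
    rw [hA', Matrix.add_mul, Matrix.mul_assoc _ VLᴴ, Matrix.mul_assoc _ VRᴴ, hVLR, hVR]
    simp
  have hAH : Aᴴ = VL * S * ULᴴ + VR * Dᴴ * URᴴ := by
    rw [hA']
    simp [hSH, Matrix.mul_assoc]
  have hAU : Aᴴ * UL = VL * S := by
    rw [hAH, Matrix.add_mul, Matrix.mul_assoc _ ULᴴ, Matrix.mul_assoc _ URᴴ, hUL, hURL]
    simp
  have hAU' : Aᴴ * UR = VR * Dᴴ := by
    rw [hAH, Matrix.add_mul, Matrix.mul_assoc _ ULᴴ, Matrix.mul_assoc _ URᴴ, hULR, hUR]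
    simp
  have hQB : (Q * BL)ᴴ * (Q * BL) = 1 := by
    rw [conjTranspose_mul, Matrix.mul_assoc, ← Matrix.mul_assoc Qᴴ, hQ, Matrix.one_mul, hBL]
  have hidem : ∀ {l r : ℕ} {M : Matrix (Fin l) (Fin r) ℂ}, Mᴴ * M = 1 →
      M * Mᴴ * (M * Mᴴ) = M * Mᴴ := by
    intro l r M h
    rw [Matrix.mul_assoc, ← Matrix.mul_assoc Mᴴ, h, Matrix.one_mul]
  have hPA : Q * BL * (Q * BL)ᴴ * A = Q * (BL * Sh * hLᴴ) := by
    calc _ = Q * (BL * (BLᴴ * (Qᴴ * A))) := by simp [Matrix.mul_assoc]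
      _ = Q * (BL * ((BLᴴ * BL) * (Sh * hLᴴ) + (BLᴴ * BR) * (Dh * hRᴴ))) := by
        rw [hB', Matrix.mul_add]
        simp only [Matrix.mul_assoc]
      _ = _ := by
        rw [hBL, hBLR]
        simp [Matrix.mul_assoc]
  have hPP : Q * BL * (Q * BL)ᴴ * (Q * Qᴴ) = Q * BL * (Q * BL)ᴴ := by
    calc _ = Q * (BL * (BLᴴ * ((Qᴴ * Q) * Qᴴ))) := by simp [Matrix.mul_assoc]
      _ = _ := by
        rw [hQ]
        simp [Matrix.mul_assoc]
  have hPA' : Q * BL * (Q * BL)ᴴ * (Q * Qᴴ * A) = Q * (BL * Sh * hLᴴ) := by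
    rw [← Matrix.mul_assoc, hPP, hPA]
  have hcomm : Q * BL * (Q * BL)ᴴ * (Q * Qᴴ * A) = Q * Qᴴ * A * (hL * hLᴴ) := by
    rw [hPA', Matrix.mul_assoc Q Qᴴ, hB', Matrix.mul_assoc Q, Matrix.add_mul,
      Matrix.mul_assoc _ hLᴴ, Matrix.mul_assoc _ hRᴴ, ← Matrix.mul_assoc hLᴴ,
      ← Matrix.mul_assoc hRᴴ, hhL, hhRL]
    simp
  have hrest : ‖(1 - Q * BL * (Q * BL)ᴴ) * (Q * Qᴴ * A)‖ ≤ σ k := by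
    have h1 : (1 - Q * BL * (Q * BL)ᴴ) * (Q * Qᴴ * A) = Q * (BR * (Dh * hRᴴ)) := by
      rw [Matrix.sub_mul, hPA', Matrix.mul_assoc Q Qᴴ, hB', Matrix.one_mul, ← Matrix.mul_sub,
        add_sub_cancel_left, Matrix.mul_assoc]
    rw [h1]
    calc _ ≤ 1 * (1 * (σ k * 1)) := by
          refine (l2_opNorm_mul _ _).trans (mul_le_mul hQn ?_ (norm_nonneg _) zero_le_one)
          refine (l2_opNorm_mul _ _).trans (mul_le_mul hBRn ?_ (norm_nonneg _) zero_le_one)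
          refine (l2_opNorm_mul _ _).trans (mul_le_mul hρ ?_ (norm_nonneg _) (hσ0 k))
          rwa [l2_opNorm_conjTranspose]
      _ = σ k := by ring
  have hself : ∀ {l r : ℕ} (M : Matrix (Fin l) (Fin r) ℂ), (M * Mᴴ)ᴴ = M * Mᴴ := by
    intro l r M
    simp
  have hX := hN.one_sub_mul_singularVectors_le hrank (hσ0 k) hgap (hσm 0 (k - 1) (Nat.zero_le _))
    hAV hAU hST hT hAn (hself Q) (hself (Q * BL)) (hself hL) (l2OpNorm_one_sub_le_one hhL)
    hPP (hidem hQB) (hidem hhL) hcomm hrest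
  have hE := hN.one_sub_mul_singularVectors_le_of_powerIteration q (P := Q * Qᴴ) (hσ0 k)
    hAV hAU hAV' hAU' hVV hURn hST hT hD (mul_rpinv_cancel hΩ) (l2OpNorm_one_sub_le_one hQ)
    (by rw [hQR, ← Matrix.mul_assoc, Matrix.sub_mul, Matrix.mul_assoc Q, hQ]; simp)
  have hsplit : A - Q * (BL * Sh * hLᴴ) =
      (1 - Q * BL * (Q * BL)ᴴ) * UL * S * VLᴴ +
        (1 - Q * BL * (Q * BL)ᴴ) * (UR * (D * VRᴴ)) := by
    rw [← hPA]
    nth_rw 1 [← Matrix.one_mul A]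
    rw [← Matrix.sub_mul]
    nth_rw 1 [hA']
    rw [Matrix.mul_add]
    simp only [Matrix.mul_assoc]
  have hγ : 0 < 1 - σ k / σ (k - 1) := sub_pos.2 ((div_lt_one hrank).2 hgap)
  rw [hsplit]
  calc _ ≤ N ((1 - Q * BL * (Q * BL)ᴴ) * UL * S) * 1 + 1 * (1 * (N D * 1)) := by
        refine (hN.add_le _ _).trans (add_le_add (hN.mul_le_right_of_le ?_ _) ?_)
        · rwa [l2_opNorm_conjTranspose]
        refine (hN.mul_le_left_of_le (l2OpNorm_one_sub_le_one hQB) _).trans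
          (mul_le_mul_of_nonneg_left ?_ zero_le_one)
        refine (hN.mul_le_left_of_le hURn _).trans (mul_le_mul_of_nonneg_left ?_ zero_le_one)
        refine hN.mul_le_right_of_le ?_ _
        rwa [l2_opNorm_conjTranspose]
    _ ≤ σ 0 / σ (k - 1) / (1 - σ k / σ (k - 1)) * ((σ k / σ (k - 1)) ^ (2 * q) *
          ‖VRᴴ * Ω * rpinv (VLᴴ * Ω)‖ * N D) + N D := by
        rw [mul_one, one_mul, one_mul, mul_one]
        refine add_le_add (hX.trans (mul_le_mul_of_nonneg_left hE ?_)) le_rfl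
        exact div_nonneg (div_nonneg (hσ0 0) hrank.le) hγ.le
    _ = _ := by ring

end IsIdealNorm

end Norms

/-- Theorem 4.1, bound (4.3): error of the truncated approximation `Q·B_k`
in the spectral and Frobenius norms. -/
theorem lowrank_error_truncated
    {k m₂ n₂ ρ : ℕ} (q : ℕ) (hk : 1 ≤ k)
    (A : Matrix (Fin (k + m₂)) (Fin (k + n₂)) ℂ)
    (U : Matrix (Fin (k + m₂)) (Fin (k + m₂)) ℂ)
    (V : Matrix (Fin (k + n₂)) (Fin (k + n₂)) ℂ)
    (σ : ℕ → ℝ)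
    (hU : Uᴴ * U = 1) (hU' : U * Uᴴ = 1)
    (hV : Vᴴ * V = 1) (hV' : V * Vᴴ = 1)
    (hσ0 : ∀ i, 0 ≤ σ i) (hσm : ∀ i j, i ≤ j → σ j ≤ σ i)
    (hA : A = U * diagRect σ 0 (k + m₂) (k + n₂) * Vᴴ)
    (hrank : 0 < σ (k - 1)) (hgap : σ k < σ (k - 1))
    (Ω : Matrix (Fin (k + n₂)) (Fin (k + ρ)) ℂ)
    (hΩ : ((colsL V)ᴴ * Ω).rank = k)
    (Q : Matrix (Fin (k + m₂)) (Fin (k + ρ)) ℂ)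
    (R : Matrix (Fin (k + ρ)) (Fin (k + ρ)) ℂ)
    (hQ : Qᴴ * Q = 1) (hR : R.BlockTriangular id)
    (hQR : (A * Aᴴ) ^ q * A * Ω = Q * R)
    (UB : Matrix (Fin (k + ρ)) (Fin (k + ρ)) ℂ)
    (Vh : Matrix (Fin (k + n₂)) (Fin (k + ρ)) ℂ)
    (σh : ℕ → ℝ)
    (hUB : UBᴴ * UB = 1) (hUB' : UB * UBᴴ = 1)
    (hVh : Vhᴴ * Vh = 1)
    (hσh0 : ∀ i, 0 ≤ σh i) (hσhm : ∀ i j, i ≤ j → σh j ≤ σh i)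
    (hB : Qᴴ * A = UB * diagRect σh 0 (k + ρ) (k + ρ) * Vhᴴ)
    :
    ∀ p ∈ ({2, ⊤} : Set ℝ≥0∞),
      schatten p (A - Q * (colsL UB * diagRect σh 0 k k * (colsL Vh)ᴴ)) ≤
        (1 + σ 0 / σ (k - 1) * ((σ k / σ (k - 1)) ^ (2 * q) / (1 - (σ k / σ (k - 1)))) * sval ((colsR V)ᴴ * Ω * rpinv ((colsL V)ᴴ * Ω)) 0) *
          schatten p (diagRect σ k m₂ n₂) := by
  intro p hp
  rw [sval_zero]
  rcases hp with rfl | rfl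
  · rw [schatten_two, schatten_two]
    exact isIdealNorm_frob.lowrank_error_truncated_le q hk hU hV hV' hσ0 hσm hA hrank hgap hΩ hQ
      hQR hUB hVh hσh0 hσhm hB
  · rw [schatten_top, schatten_top]
    exact isIdealNorm_l2OpNorm.lowrank_error_truncated_le q hk hU hV hV' hσ0 hσm hA hrank hgap hΩ
      hQ hQR hUB hVh hσh0 hσhm hB
end

section
/- Under the stated setup and assumptions, for every p ∈ [2,∞] the low-rank approximation error satisfies ‖(I − QQ*)A‖_p² ≤ ‖Σ_⊥‖_p² + γ_k^{4q}·‖Σ_⊥Ω_2Ω_1†‖_p² in the Schatten-p norm. -/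
open scoped ENNReal
open Matrix

section SchattenNorm

open scoped ComplexOrder

/-- The eigenvalues of `Mᴴ * M`, that is, the squared singular values of `M`. -/
noncomputable abbrev gramEigenvalues {m n : ℕ} (M : Matrix (Fin m) (Fin n) ℂ) : Fin n → ℝ :=
  (Matrix.isHermitian_conjTranspose_mul_self M).eigenvalues

lemma gramEigenvalues_nonneg {m n : ℕ} (M : Matrix (Fin m) (Fin n) ℂ) (i : Fin n) :
    0 ≤ gramEigenvalues M i :=
  (Matrix.posSemidef_conjTranspose_mul_self M).eigenvalues_nonneg i

lemma sum_range_getD {α : Type*} (l : List α) (d : α) (f : α → ℝ) :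
    ∑ j ∈ Finset.range l.length, f (l.getD j d) = (l.map f).sum := by
  induction l with
  | nil => simp
  | cons a l ih =>
    rw [List.length_cons, Finset.sum_range_succ']
    simp [← ih, add_comm]

lemma sum_sval {m n : ℕ} (M : Matrix (Fin m) (Fin n) ℂ) (f : ℝ → ℝ) :
    ∑ j ∈ Finset.range n, f (sval M j) = ∑ i, f (√(gramEigenvalues M i)) := by
  have h := sum_range_getD (List.insertionSort (· ≥ ·)
    ((List.ofFn (gramEigenvalues M)).map Real.sqrt)) 0 f
  rw [List.length_insertionSort, List.length_map, List.length_ofFn] at h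
  refine h.trans ?_
  rw [((List.perm_insertionSort _ _).map f).sum_eq, List.map_map, List.map_ofFn, List.sum_ofFn]
  rfl

lemma sval_nonneg {m n : ℕ} (M : Matrix (Fin m) (Fin n) ℂ) (j : ℕ) : 0 ≤ sval M j := by
  unfold sval
  set l := List.insertionSort (· ≥ ·) ((List.ofFn (gramEigenvalues M)).map Real.sqrt)
  by_cases hj : j < l.length
  · rw [List.getD_eq_getElem _ _ hj]
    obtain ⟨x, -, hx⟩ := List.mem_map.mp ((List.mem_insertionSort _).mp (List.getElem_mem hj))
    exact hx ▸ Real.sqrt_nonneg x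
  · rw [List.getD_eq_default _ _ (not_lt.mp hj)]

lemma sval_le_sval_zero {m n : ℕ} (M : Matrix (Fin m) (Fin n) ℂ) (j : ℕ) :
    sval M j ≤ sval M 0 := by
  have h0 := sval_nonneg M 0
  unfold sval at h0 ⊢
  set l := List.insertionSort (· ≥ ·) ((List.ofFn (gramEigenvalues M)).map Real.sqrt)
  by_cases hj : j < l.length
  · have hs : l.Pairwise (· ≥ ·) := List.pairwise_insertionSort _ _
    rw [List.getD_eq_getElem _ _ hj, List.getD_eq_getElem _ _ (by omega)]
    rcases Nat.eq_zero_or_pos j with rfl | hj0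
    · exact le_rfl
    · exact List.pairwise_iff_getElem.mp hs 0 j (by omega) hj hj0
  · rwa [List.getD_eq_default _ _ (not_lt.mp hj)]

lemma schatten_nonneg {m n : ℕ} (p : ℝ≥0∞) (M : Matrix (Fin m) (Fin n) ℂ) :
    0 ≤ schatten p M := by
  unfold schatten
  split_ifs
  · exact sval_nonneg M 0
  · exact Real.rpow_nonneg (Finset.sum_nonneg fun j _ => Real.rpow_nonneg (sval_nonneg M j) _) _

lemma schatten_of_ne_top {m n : ℕ} {p : ℝ≥0∞} (hp : p ≠ ⊤) (M : Matrix (Fin m) (Fin n) ℂ) :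
    schatten p M = (∑ i, gramEigenvalues M i ^ (p.toReal / 2)) ^ (1 / p.toReal) := by
  rw [schatten, if_neg hp, sum_sval M (· ^ p.toReal)]
  congr 1
  refine Finset.sum_congr rfl fun i _ => ?_
  rw [Real.sqrt_eq_rpow, ← Real.rpow_mul (gramEigenvalues_nonneg M i)]
  ring_nf

lemma schatten_sq_of_ne_top {m n : ℕ} {p : ℝ≥0∞} (hp : p ≠ ⊤)
    (M : Matrix (Fin m) (Fin n) ℂ) :
    schatten p M ^ 2 = (∑ i, gramEigenvalues M i ^ (p.toReal / 2)) ^ (1 / (p.toReal / 2)) := by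
  rw [schatten_of_ne_top hp, ← Real.rpow_natCast, ← Real.rpow_mul
    (Finset.sum_nonneg fun i _ => Real.rpow_nonneg (gramEigenvalues_nonneg M i) _)]
  congr 1
  push_cast
  field_simp

/-- A sum over the spectrum of `Mᴴ * M` of a function vanishing at zero is the same for `M * Mᴴ`,
the two spectra agreeing up to zeros. -/
lemma sum_gramEigenvalues_conjTranspose {m n : ℕ} (M : Matrix (Fin m) (Fin n) ℂ) (f : ℝ → ℝ)
    (hf : f 0 = 0) :
    ∑ i, f (gramEigenvalues Mᴴ i) = ∑ i, f (gramEigenvalues M i) := by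
  have hsum : ∀ {a b : ℕ} (N : Matrix (Fin a) (Fin b) ℂ),
      (((Nᴴ * N).charpoly.roots.map fun z : ℂ => f z.re)).sum = ∑ i, f (gramEigenvalues N i) := by
    intro a b N
    rw [(Matrix.isHermitian_conjTranspose_mul_self N).roots_charpoly_eq_eigenvalues,
      Multiset.map_map]
    simp [Finset.sum]
  have hX : ∀ (a : ℕ) (r : Polynomial ℂ), r.Monic →
      (((Polynomial.X ^ a * r).roots.map fun z : ℂ => f z.re)).sum
        = ((r.roots.map fun z : ℂ => f z.re)).sum := by
    intro a r hr
    rw [Polynomial.roots_mul ((Polynomial.monic_X_pow a).mul hr).ne_zero]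
    simp [Multiset.map_nsmul, hf, Multiset.sum_nsmul]
  rw [← hsum, ← hsum, conjTranspose_conjTranspose, ← hX n _ (Matrix.charpoly_monic (M * Mᴴ)),
    ← hX m _ (Matrix.charpoly_monic (Mᴴ * M))]
  have := Matrix.charpoly_mul_comm' M Mᴴ
  rw [Fintype.card_fin, Fintype.card_fin] at this
  rw [this]

lemma schatten_conjTranspose {m n : ℕ} {p : ℝ≥0∞} (hp2 : 2 ≤ p) (hp : p ≠ ⊤)
    (M : Matrix (Fin m) (Fin n) ℂ) : schatten p Mᴴ = schatten p M := by
  have h2 : 2 ≤ p.toReal := by simpa using ENNReal.toReal_mono hp hp2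
  rw [schatten_of_ne_top hp, schatten_of_ne_top hp,
    sum_gramEigenvalues_conjTranspose M (· ^ (p.toReal / 2))
      (Real.zero_rpow (by positivity))]

lemma conjTranspose_mul_self_eq_spectral {m n : ℕ} (M : Matrix (Fin m) (Fin n) ℂ) :
    ∃ W : Matrix (Fin n) (Fin n) ℂ, Wᴴ * W = 1 ∧ W * Wᴴ = 1 ∧
      Mᴴ * M = W * diagonal (fun i => (gramEigenvalues M i : ℂ)) * Wᴴ := by
  have h := Matrix.isHermitian_conjTranspose_mul_self M
  refine ⟨h.eigenvectorUnitary, ?_, ?_, ?_⟩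
  · exact Unitary.coe_star_mul_self h.eigenvectorUnitary
  · exact Unitary.coe_mul_star_self h.eigenvectorUnitary
  · have := h.spectral_theorem
    rw [Unitary.conjStarAlgAut_apply] at this
    exact this

/-- Schur-type inequality: in any orthonormal basis, the diagonal of `Mᴴ * M` has `ℓ^r` norm at
most that of the spectrum. -/
lemma sum_diag_rpow_le {m n : ℕ} (M : Matrix (Fin m) (Fin n) ℂ) {r : ℝ} (hr : 1 ≤ r)
    {X : Matrix (Fin n) (Fin n) ℂ} (hX : Xᴴ * X = 1) (hX' : X * Xᴴ = 1) :
    ∑ j, ((Xᴴ * (Mᴴ * M) * X) j j).re ^ r ≤ ∑ i, gramEigenvalues M i ^ r := by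
  obtain ⟨W, hW, hW', hM⟩ := conjTranspose_mul_self_eq_spectral M
  set B := Wᴴ * X with hB
  have hBB : Bᴴ * B = 1 := by
    rw [hB, conjTranspose_mul, conjTranspose_conjTranspose, Matrix.mul_assoc,
      ← Matrix.mul_assoc W, hW', Matrix.one_mul, hX]
  have hBB' : B * Bᴴ = 1 := by
    rw [hB, conjTranspose_mul, conjTranspose_conjTranspose, Matrix.mul_assoc,
      ← Matrix.mul_assoc X, hX', Matrix.one_mul, hW]
  have hcol : ∀ j, ∑ i, Complex.normSq (B i j) = 1 := by
    intro j
    have := congrFun (congrFun hBB j) j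
    simp only [mul_apply, conjTranspose_apply, one_apply_eq, RCLike.star_def,
      ← Complex.normSq_eq_conj_mul_self] at this
    exact_mod_cast this
  have hrow : ∀ i, ∑ j, Complex.normSq (B i j) = 1 := by
    intro i
    have := congrFun (congrFun hBB' i) i
    simp only [mul_apply, conjTranspose_apply, one_apply_eq, RCLike.star_def,
      Complex.mul_conj] at this
    exact_mod_cast this
  have hdiag : ∀ j, ((Xᴴ * (Mᴴ * M) * X) j j).re
      = ∑ i, Complex.normSq (B i j) * gramEigenvalues M i := by
    intro j
    have : Xᴴ * (Mᴴ * M) * X = Bᴴ * (diagonal (fun i => (gramEigenvalues M i : ℂ)) * B) := by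
      rw [hM, hB, conjTranspose_mul, conjTranspose_conjTranspose]
      simp only [Matrix.mul_assoc]
    rw [this, mul_apply, Complex.re_sum]
    refine Finset.sum_congr rfl fun i _ => ?_
    rw [diagonal_mul, conjTranspose_apply, RCLike.star_def, mul_left_comm,
      ← Complex.normSq_eq_conj_mul_self, mul_comm]
    exact_mod_cast rfl
  calc ∑ j, ((Xᴴ * (Mᴴ * M) * X) j j).re ^ r
      ≤ ∑ j, ∑ i, Complex.normSq (B i j) * gramEigenvalues M i ^ r := by
        refine Finset.sum_le_sum fun j _ => ?_
        rw [hdiag]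
        exact Real.rpow_arith_mean_le_arith_mean_rpow _ _ _ (fun i _ => Complex.normSq_nonneg _)
          (hcol j) (fun i _ => gramEigenvalues_nonneg M i) hr
    _ = ∑ i, gramEigenvalues M i ^ r := by
        rw [Finset.sum_comm]
        simp only [← Finset.sum_mul, hrow, one_mul]

lemma re_diag_conj_nonneg {m n : ℕ} (M : Matrix (Fin m) (Fin n) ℂ)
    (X : Matrix (Fin n) (Fin n) ℂ) (j : Fin n) : 0 ≤ ((Xᴴ * (Mᴴ * M) * X) j j).re :=
  (Complex.le_def.mp (((posSemidef_conjTranspose_mul_self M).conjTranspose_mul_mul_same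
    X).diag_nonneg (i := j))).1

/-- If `Mᴴ * M ≤ Nᴴ * N + Lᴴ * L` in the Loewner order, the squared Schatten norms for `p ≥ 2`
satisfy the same inequality. -/
lemma schatten_sq_le_add {a b c n : ℕ} {p : ℝ≥0∞} (hp2 : 2 ≤ p) (hp : p ≠ ⊤)
    (M : Matrix (Fin a) (Fin n) ℂ) (N : Matrix (Fin b) (Fin n) ℂ) (L : Matrix (Fin c) (Fin n) ℂ)
    {s t : ℝ} (hs : 0 ≤ s) (ht : 0 ≤ t)
    (h : ((s : ℂ) • (Nᴴ * N) + (t : ℂ) • (Lᴴ * L) - Mᴴ * M).PosSemidef) :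
    schatten p M ^ 2 ≤ s * schatten p N ^ 2 + t * schatten p L ^ 2 := by
  have h2 : 2 ≤ p.toReal := by simpa using ENNReal.toReal_mono hp hp2
  simp only [schatten_sq_of_ne_top hp]
  set r := p.toReal / 2 with hr
  have hr1 : 1 ≤ r := by rw [hr]; linarith
  obtain ⟨X, hX, hX', hM⟩ := conjTranspose_mul_self_eq_spectral M
  have hMX : ∀ j, gramEigenvalues M j = ((Xᴴ * (Mᴴ * M) * X) j j).re := by
    intro j
    rw [hM]
    simp only [Matrix.mul_assoc, hX, Matrix.mul_one]
    rw [← Matrix.mul_assoc, hX, Matrix.one_mul, diagonal_apply_eq, Complex.ofReal_re]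
  have hle : ∀ j, gramEigenvalues M j ≤
      s * ((Xᴴ * (Nᴴ * N) * X) j j).re + t * ((Xᴴ * (Lᴴ * L) * X) j j).re := by
    intro j
    have := (Complex.le_def.mp ((h.conjTranspose_mul_mul_same X).diag_nonneg (i := j))).1
    simp only [Matrix.mul_sub, Matrix.sub_mul, Matrix.mul_add, Matrix.add_mul, Matrix.mul_smul,
      Matrix.smul_mul, Matrix.sub_apply, Matrix.add_apply, Matrix.smul_apply, smul_eq_mul, Complex.sub_re,
      Complex.add_re, Complex.re_ofReal_mul, Complex.zero_re] at this
    rw [hMX]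
    linarith
  have hscale : ∀ {d : ℕ} (K : Matrix (Fin d) (Fin n) ℂ) {u : ℝ}, 0 ≤ u →
      (∑ j, (u * ((Xᴴ * (Kᴴ * K) * X) j j).re) ^ r) ^ (1 / r)
        ≤ u * (∑ i, gramEigenvalues K i ^ r) ^ (1 / r) := by
    intro d K u hu
    have hS : 0 ≤ ∑ j, ((Xᴴ * (Kᴴ * K) * X) j j).re ^ r :=
      Finset.sum_nonneg fun j _ => Real.rpow_nonneg (re_diag_conj_nonneg K X j) _
    simp only [Real.mul_rpow hu (re_diag_conj_nonneg K X _)]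
    rw [← Finset.mul_sum, Real.mul_rpow (Real.rpow_nonneg hu _) hS, ← Real.rpow_mul hu,
      mul_one_div_cancel (by positivity), Real.rpow_one]
    exact mul_le_mul_of_nonneg_left
      (Real.rpow_le_rpow hS (sum_diag_rpow_le K hr1 hX hX') (by positivity)) hu
  calc (∑ j, gramEigenvalues M j ^ r) ^ (1 / r)
      ≤ (∑ j, (s * ((Xᴴ * (Nᴴ * N) * X) j j).re
          + t * ((Xᴴ * (Lᴴ * L) * X) j j).re) ^ r) ^ (1 / r) := by
        refine Real.rpow_le_rpow (Finset.sum_nonneg fun j _ =>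
          Real.rpow_nonneg (gramEigenvalues_nonneg M j) _) ?_ (by positivity)
        exact Finset.sum_le_sum fun j _ =>
          Real.rpow_le_rpow (gramEigenvalues_nonneg M j) (hle j) (by positivity)
    _ ≤ _ := Real.Lp_add_le_of_nonneg _ hr1
        (fun j _ => mul_nonneg hs (re_diag_conj_nonneg N X j))
        (fun j _ => mul_nonneg ht (re_diag_conj_nonneg L X j))
    _ ≤ _ := add_le_add (hscale N hs) (hscale L ht)

lemma schatten_mul_le {a b n : ℕ} {p : ℝ≥0∞} (hp2 : 2 ≤ p) (hp : p ≠ ⊤)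
    (B : Matrix (Fin a) (Fin b) ℂ) (M : Matrix (Fin b) (Fin n) ℂ) {c : ℝ} (hc : 0 ≤ c)
    (hB : (((c ^ 2 : ℝ) : ℂ) • (1 : Matrix (Fin b) (Fin b) ℂ) - Bᴴ * B).PosSemidef) :
    schatten p (B * M) ≤ c * schatten p M := by
  refine le_of_sq_le_sq ?_ (mul_nonneg hc (schatten_nonneg p M))
  have := schatten_sq_le_add hp2 hp (B * M) M M (sq_nonneg c) le_rfl (by
    have h := hB.conjTranspose_mul_mul_same M
    rw [Matrix.mul_sub, Matrix.sub_mul] at h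
    simpa [conjTranspose_mul, Matrix.mul_assoc] using h)
  rw [mul_pow]
  simpa using this

lemma schatten_diagonal_mul_le {b n : ℕ} {p : ℝ≥0∞} (hp2 : 2 ≤ p) (hp : p ≠ ⊤)
    (d : Fin b → ℝ) (M : Matrix (Fin b) (Fin n) ℂ) {c : ℝ} (hd0 : ∀ i, 0 ≤ d i)
    (hc : 0 ≤ c) (hd : ∀ i, d i ≤ c) :
    schatten p (diagonal (fun i => (d i : ℂ)) * M) ≤ c * schatten p M := by
  refine schatten_mul_le hp2 hp _ M hc ?_
  rw [diagonal_conjTranspose, diagonal_mul_diagonal, smul_one_eq_diagonal, diagonal_sub]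
  refine PosSemidef.diagonal fun i => ?_
  have : 0 ≤ c ^ 2 - d i * d i := by nlinarith [hd0 i, hd i]
  simpa using (by exact_mod_cast this : (0 : ℂ) ≤ ((c ^ 2 - d i * d i : ℝ) : ℂ))

/-- The spectral norm is the limit of the Schatten norms. -/
lemma tendsto_schatten_top {m n : ℕ} (M : Matrix (Fin m) (Fin n) ℂ) :
    Filter.Tendsto (fun t : ℕ => schatten (t : ℝ≥0∞) M) Filter.atTop
      (nhds (schatten ⊤ M)) := by
  have htop : schatten ⊤ M = sval M 0 := if_pos rfl
  have h0 := sval_nonneg M 0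
  rw [htop]
  rcases Nat.eq_zero_or_pos n with rfl | hn
  · have hz : sval M 0 = 0 := by simp [sval]
    rw [hz]
    refine tendsto_const_nhds.congr' ?_
    filter_upwards [Filter.eventually_gt_atTop 0] with t ht
    rw [schatten, if_neg (ENNReal.natCast_ne_top t)]
    simp [Real.zero_rpow, ht.ne']
  have hlim : Filter.Tendsto (fun t : ℕ => (n : ℝ) ^ (1 / (t : ℝ)) * sval M 0) Filter.atTop
      (nhds (sval M 0)) := by
    have h1 : Filter.Tendsto (fun t : ℕ => (n : ℝ) ^ (1 / (t : ℝ))) Filter.atTop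
        (nhds ((n : ℝ) ^ (0 : ℝ))) :=
      (Real.continuousAt_const_rpow (by positivity)).tendsto.comp
        tendsto_one_div_atTop_nhds_zero_nat
    simpa using h1.mul_const (sval M 0)
  refine tendsto_of_tendsto_of_tendsto_of_le_of_le' tendsto_const_nhds hlim ?_ ?_
  all_goals
    filter_upwards [Filter.eventually_gt_atTop 0] with t ht
    have ht' : (0 : ℝ) < t := by exact_mod_cast ht
    rw [schatten, if_neg (ENNReal.natCast_ne_top t), ENNReal.toReal_natCast]
  · calc sval M 0 = (sval M 0 ^ (t : ℝ)) ^ (1 / (t : ℝ)) := by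
          rw [← Real.rpow_mul h0, mul_one_div_cancel ht'.ne', Real.rpow_one]
      _ ≤ _ := by
          gcongr
          exact Finset.single_le_sum (f := fun j => sval M j ^ (t : ℝ))
            (fun j _ => Real.rpow_nonneg (sval_nonneg M j) _) (Finset.mem_range.mpr hn)
  · calc _ ≤ ((n : ℝ) * sval M 0 ^ (t : ℝ)) ^ (1 / (t : ℝ)) := by
          refine Real.rpow_le_rpow (Finset.sum_nonneg fun j _ =>
            Real.rpow_nonneg (sval_nonneg M j) _) ?_ (by positivity)
          refine (Finset.sum_le_card_nsmul _ _ (sval M 0 ^ (t : ℝ)) fun j _ =>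
            Real.rpow_le_rpow (sval_nonneg M j) (sval_le_sval_zero M j) ht'.le).trans ?_
          simp
      _ = _ := by
          rw [Real.mul_rpow (by positivity) (by positivity), ← Real.rpow_mul h0,
            mul_one_div_cancel ht'.ne', Real.rpow_one]

end SchattenNorm

section BlockColumns

variable {a b c : ℕ}

lemma colsL_conjTranspose_mul_colsL {M : Matrix (Fin a) (Fin (b + c)) ℂ} (hM : Mᴴ * M = 1) :
    (colsL M)ᴴ * colsL M = 1 := by
  ext i j
  simpa [mul_apply, colsL, one_apply] using
    congrFun (congrFun hM (Fin.castAdd c i)) (Fin.castAdd c j)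

lemma colsR_conjTranspose_mul_colsR {M : Matrix (Fin a) (Fin (b + c)) ℂ} (hM : Mᴴ * M = 1) :
    (colsR M)ᴴ * colsR M = 1 := by
  ext i j
  simpa [mul_apply, colsR, one_apply] using
    congrFun (congrFun hM (Fin.natAdd b i)) (Fin.natAdd b j)

lemma colsL_conjTranspose_mul_colsR {M : Matrix (Fin a) (Fin (b + c)) ℂ} (hM : Mᴴ * M = 1) :
    (colsL M)ᴴ * colsR M = 0 := by
  ext i j
  have hij : Fin.castAdd c i ≠ Fin.natAdd b j := by
    intro h
    have := congrArg Fin.val h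
    simp at this
    omega
  simpa [mul_apply, colsL, colsR, one_apply, hij] using
    congrFun (congrFun hM (Fin.castAdd c i)) (Fin.natAdd b j)

lemma colsR_conjTranspose_mul_colsL {M : Matrix (Fin a) (Fin (b + c)) ℂ} (hM : Mᴴ * M = 1) :
    (colsR M)ᴴ * colsL M = 0 := by
  simpa using congrArg conjTranspose (colsL_conjTranspose_mul_colsR hM)

end BlockColumns

lemma mul_diagRect_mul_conjTranspose {a b k m₂ n₂ : ℕ} (σ : ℕ → ℝ)
    (U : Matrix (Fin a) (Fin (k + m₂)) ℂ) (V : Matrix (Fin b) (Fin (k + n₂)) ℂ) :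
    U * diagRect σ 0 (k + m₂) (k + n₂) * Vᴴ =
      colsL U * diagonal (fun i : Fin k => (σ i : ℂ)) * (colsL V)ᴴ
        + colsR U * diagRect σ k m₂ n₂ * (colsR V)ᴴ := by
  have h1 : ∀ (i : Fin k) (j : Fin n₂), (i : ℕ) ≠ k + j := fun i j => by omega
  have h2 : ∀ (i : Fin m₂) (j : Fin k), k + (i : ℕ) ≠ j := fun i j => by omega
  ext i j
  simp [mul_apply, Fin.sum_univ_add, diagRect, colsL, colsR, h1, h2, diagonal_apply, Fin.ext_iff]

lemma diagRect_mul_conjTranspose (σ : ℕ → ℝ) (off a b : ℕ) :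
    diagRect σ off a b * (diagRect σ off a b)ᴴ =
      diagonal fun i : Fin a => ((if (i : ℕ) < b then σ (off + i) ^ 2 else 0 : ℝ) : ℂ) := by
  ext i j
  simp only [mul_apply, diagRect, of_apply, conjTranspose_apply, diagonal_apply]
  by_cases hi : (i : ℕ) < b
  · rw [Finset.sum_eq_single ⟨i, hi⟩]
    · by_cases hij : i = j
      · subst hij
        simp [hi, sq]
      · have : (j : ℕ) ≠ i := fun h => hij (Fin.ext h.symm)
        simp [hij, this]
    · intro x _ hx
      have : (i : ℕ) ≠ x := fun h => hx (Fin.ext h.symm)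
      simp [this]
    · simp
  · rw [Finset.sum_eq_zero]
    · simp [hi]
    · intro x _
      have : (i : ℕ) ≠ x := by omega
      simp [this]

open scoped ComplexOrder in
lemma mul_rpinv_of_rank_eq {a b : ℕ} {M : Matrix (Fin a) (Fin b) ℂ} (hM : M.rank = a) :
    M * rpinv M = 1 := by
  have hu : IsUnit (M * Mᴴ) := by
    rw [← Matrix.linearIndependent_rows_iff_isUnit, linearIndependent_iff_card_eq_finrank_span,
      Set.finrank, ← Matrix.rank_eq_finrank_span_row, Matrix.rank_self_mul_conjTranspose, hM,
      Fintype.card_fin]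
  rw [rpinv, ← Matrix.mul_assoc]
  exact Matrix.mul_nonsing_inv _ ((Matrix.isUnit_iff_isUnit_det _).mp hu)

/-- Powers of a matrix that splits along orthogonal left and right subspaces. -/
lemma power_iteration_of_orthogonal {a b k m₂ n₂ : ℕ}
    {Uk : Matrix (Fin a) (Fin k) ℂ} {Up : Matrix (Fin a) (Fin m₂) ℂ}
    {Vk : Matrix (Fin b) (Fin k) ℂ} {Vp : Matrix (Fin b) (Fin n₂) ℂ}
    {D : Matrix (Fin k) (Fin k) ℂ} {S : Matrix (Fin m₂) (Fin n₂) ℂ}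
    (hUk : Ukᴴ * Uk = 1) (hUp : Upᴴ * Up = 1) (hUkp : Ukᴴ * Up = 0) (hUpk : Upᴴ * Uk = 0)
    (hVk : Vkᴴ * Vk = 1) (hVp : Vpᴴ * Vp = 1) (hVkp : Vkᴴ * Vp = 0) (hVpk : Vpᴴ * Vk = 0)
    {A : Matrix (Fin a) (Fin b) ℂ} (hA : A = Uk * D * Vkᴴ + Up * S * Vpᴴ) (q : ℕ) :
    (A * Aᴴ) ^ q * A =
      Uk * ((D * Dᴴ) ^ q * D) * Vkᴴ + Up * ((S * Sᴴ) ^ q * S) * Vpᴴ := by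
  have cancel : ∀ {i j l r : ℕ} {X : Matrix (Fin i) (Fin j) ℂ} {Y : Matrix (Fin j) (Fin l) ℂ}
      {Z : Matrix (Fin i) (Fin l) ℂ} (_ : X * Y = Z) (T : Matrix (Fin l) (Fin r) ℂ),
      X * (Y * T) = Z * T := by
    rintro i j l r X Y Z h T
    rw [← Matrix.mul_assoc, h]
  induction q with
  | zero => simp [hA]
  | succ q ih =>
    rw [pow_succ', Matrix.mul_assoc, ih, pow_succ', pow_succ', hA]
    simp only [conjTranspose_add, conjTranspose_mul, conjTranspose_conjTranspose, Matrix.mul_add,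
      Matrix.add_mul, Matrix.mul_assoc, cancel hUk, cancel hUp, cancel hUkp, cancel hUpk,
      cancel hVk, cancel hVp, cancel hVkp, cancel hVpk, Matrix.one_mul, Matrix.zero_mul,
      Matrix.mul_zero, add_zero, zero_add]

section ErrorBound

open scoped ComplexOrder

/-- The bound for finite exponents, for an arbitrary matrix split along orthogonal subspaces. -/
lemma schatten_error_sq_le {a b k m₂ n₂ l : ℕ} {p : ℝ≥0∞} (hp2 : 2 ≤ p) (hp : p ≠ ⊤)
    {Uk : Matrix (Fin a) (Fin k) ℂ} {Up : Matrix (Fin a) (Fin m₂) ℂ}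
    {Vk : Matrix (Fin b) (Fin k) ℂ} {Vp : Matrix (Fin b) (Fin n₂) ℂ}
    {D : Matrix (Fin k) (Fin k) ℂ} {S : Matrix (Fin m₂) (Fin n₂) ℂ}
    (hUp : Upᴴ * Up = 1)
    (hVk : Vkᴴ * Vk = 1) (hVp : Vpᴴ * Vp = 1) (hVkp : Vkᴴ * Vp = 0) (hVpk : Vpᴴ * Vk = 0)
    {A : Matrix (Fin a) (Fin b) ℂ} (hA : A = Uk * D * Vkᴴ + Up * S * Vpᴴ)
    {Q : Matrix (Fin a) (Fin l) ℂ} (hQ : Qᴴ * Q = 1)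
    {F : Matrix (Fin m₂) (Fin k) ℂ} {T : Matrix (Fin l) (Fin k) ℂ} (hF : Uk + Up * F = Q * T) :
    schatten p ((1 - Q * Qᴴ) * A) ^ 2 ≤ schatten p S ^ 2 + schatten p (F * D) ^ 2 := by
  set E := 1 - Q * Qᴴ with hE
  have hEQ : E * Q = 0 := by
    rw [hE, Matrix.sub_mul, Matrix.mul_assoc, hQ, Matrix.one_mul, Matrix.mul_one, sub_self]
  have hEE : Eᴴ * E = E := by
    have hEH : Eᴴ = E := by simp [hE]
    rw [hEH]
    nth_rw 2 [hE]
    rw [Matrix.mul_sub, ← Matrix.mul_assoc, hEQ, Matrix.zero_mul, sub_zero, Matrix.mul_one]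
  have hEUk : E * Uk = -(E * Up * F) := by
    rw [eq_neg_iff_add_eq_zero, Matrix.mul_assoc, ← Matrix.mul_add, hF, ← Matrix.mul_assoc, hEQ,
      Matrix.zero_mul]
  have hcontr : (((1 ^ 2 : ℝ) : ℂ) • (1 : Matrix (Fin m₂) (Fin m₂) ℂ)
      - (E * Up)ᴴ * (E * Up)).PosSemidef := by
    have h : ((1 ^ 2 : ℝ) : ℂ) • (1 : Matrix (Fin m₂) (Fin m₂) ℂ) - (E * Up)ᴴ * (E * Up)
        = (Qᴴ * Up)ᴴ * (Qᴴ * Up) := by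
      rw [conjTranspose_mul, Matrix.mul_assoc, ← Matrix.mul_assoc Eᴴ, hEE, hE, Matrix.sub_mul,
        Matrix.mul_sub, Matrix.one_mul, hUp]
      simp [Matrix.mul_assoc]
    rw [h]
    exact posSemidef_conjTranspose_mul_self _
  set N := E * Up * S with hN
  set L := E * Up * (F * D) with hL
  have hEA : E * A = N * Vpᴴ - L * Vkᴴ := by
    rw [hA, Matrix.mul_add, Matrix.mul_assoc Uk, ← Matrix.mul_assoc E Uk, hEUk, hN, hL]
    simp only [Matrix.mul_assoc, Matrix.neg_mul]
    abel
  have hgram : (E * A)ᴴᴴ * (E * A)ᴴ = N * Nᴴ + L * Lᴴ := by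
    have e1 : Vpᴴ * (Vp * Nᴴ) = Nᴴ := by rw [← Matrix.mul_assoc, hVp, Matrix.one_mul]
    have e2 : Vkᴴ * (Vk * Lᴴ) = Lᴴ := by rw [← Matrix.mul_assoc, hVk, Matrix.one_mul]
    have e3 : Vkᴴ * (Vp * Nᴴ) = 0 := by rw [← Matrix.mul_assoc, hVkp, Matrix.zero_mul]
    have e4 : Vpᴴ * (Vk * Lᴴ) = 0 := by rw [← Matrix.mul_assoc, hVpk, Matrix.zero_mul]
    rw [hEA]
    simp only [conjTranspose_sub, conjTranspose_mul, conjTranspose_conjTranspose, Matrix.mul_sub,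
      Matrix.sub_mul, Matrix.mul_assoc, e1, e2, e3, e4, Matrix.mul_zero]
    abel
  have hsplit := schatten_sq_le_add hp2 hp (E * A)ᴴ Nᴴ Lᴴ zero_le_one zero_le_one (by
    rw [hgram]
    simpa using PosSemidef.zero)
  have hNS : schatten p N ≤ 1 * schatten p S := schatten_mul_le hp2 hp _ S zero_le_one hcontr
  have hLF : schatten p L ≤ 1 * schatten p (F * D) :=
    schatten_mul_le hp2 hp _ (F * D) zero_le_one hcontr
  simp only [schatten_conjTranspose hp2 hp, one_mul] at hsplit hNS hLF
  exact hsplit.trans (add_le_add (pow_le_pow_left₀ (schatten_nonneg p N) hNS 2)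
    (pow_le_pow_left₀ (schatten_nonneg p L) hLF 2))

end ErrorBound

/-- Theorem 4.2: sharper low-rank approximation error bound in the
Schatten-p norm for `p ≥ 2`. -/
theorem lowrank_error_schatten_squared
    {k m₂ n₂ ρ : ℕ} (q : ℕ) (hk : 1 ≤ k)
    (A : Matrix (Fin (k + m₂)) (Fin (k + n₂)) ℂ)
    (U : Matrix (Fin (k + m₂)) (Fin (k + m₂)) ℂ)
    (V : Matrix (Fin (k + n₂)) (Fin (k + n₂)) ℂ)
    (σ : ℕ → ℝ)
    (hU : Uᴴ * U = 1) (hU' : U * Uᴴ = 1)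
    (hV : Vᴴ * V = 1) (hV' : V * Vᴴ = 1)
    (hσ0 : ∀ i, 0 ≤ σ i) (hσm : ∀ i j, i ≤ j → σ j ≤ σ i)
    (hA : A = U * diagRect σ 0 (k + m₂) (k + n₂) * Vᴴ)
    (hrank : 0 < σ (k - 1)) (hgap : σ k < σ (k - 1))
    (Ω : Matrix (Fin (k + n₂)) (Fin (k + ρ)) ℂ)
    (hΩ : ((colsL V)ᴴ * Ω).rank = k)
    (Q : Matrix (Fin (k + m₂)) (Fin (k + ρ)) ℂ)
    (R : Matrix (Fin (k + ρ)) (Fin (k + ρ)) ℂ)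
    (hQ : Qᴴ * Q = 1) (hR : R.BlockTriangular id)
    (hQR : (A * Aᴴ) ^ q * A * Ω = Q * R)
    :
    ∀ p : ℝ≥0∞, 2 ≤ p →
      (schatten p ((1 - Q * Qᴴ) * A)) ^ 2 ≤
        (schatten p (diagRect σ k m₂ n₂)) ^ 2 + (σ k / σ (k - 1)) ^ (4 * q) * (schatten p (diagRect σ k m₂ n₂ * ((colsR V)ᴴ * Ω * rpinv ((colsL V)ᴴ * Ω)))) ^ 2 := by
  have hUk := colsL_conjTranspose_mul_colsL hU
  have hUp := colsR_conjTranspose_mul_colsR hU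
  have hUkp := colsL_conjTranspose_mul_colsR hU
  have hUpk := colsR_conjTranspose_mul_colsL hU
  have hVk := colsL_conjTranspose_mul_colsL hV
  have hVp := colsR_conjTranspose_mul_colsR hV
  have hVkp := colsL_conjTranspose_mul_colsR hV
  have hVpk := colsR_conjTranspose_mul_colsL hV
  have hσpos : ∀ i : Fin k, 0 < σ i := fun i => hrank.trans_le (hσm _ _ (by omega))
  set D : Matrix (Fin k) (Fin k) ℂ := diagonal fun i => (σ i : ℂ) with hD
  set D' : Matrix (Fin k) (Fin k) ℂ := diagonal fun i => ((σ i)⁻¹ : ℂ) with hD'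
  set S := diagRect σ k m₂ n₂ with hS
  set Ω₁ := (colsL V)ᴴ * Ω with hΩ₁
  set Ω₂ := (colsR V)ᴴ * Ω with hΩ₂
  have hsplit : A = colsL U * D * (colsL V)ᴴ + colsR U * S * (colsR V)ᴴ :=
    hA.trans (mul_diagRect_mul_conjTranspose σ U V)
  have hpinv : Ω₁ * rpinv Ω₁ = 1 := mul_rpinv_of_rank_eq hΩ
  have hDD' : D * D' = 1 := by
    rw [hD, hD', diagonal_mul_diagonal, ← diagonal_one]
    congr 1
    ext i
    exact mul_inv_cancel₀ (by exact_mod_cast (hσpos i).ne')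
  have hD'D : D' * D = 1 := mul_eq_one_comm.mp hDD'
  have hDH : Dᴴ = D := by
    rw [hD, diagonal_conjTranspose]
    congr 1
    ext i
    simp
  have hDpow : (D * Dᴴ) ^ q * D * D' ^ (2 * q + 1) = 1 := by
    rw [hDH, ← sq, ← pow_mul, ← pow_succ, ← (Commute.mul_pow (hDD'.trans hD'D.symm)), hDD',
      one_pow]
  set F := (S * Sᴴ) ^ q * S * (Ω₂ * rpinv Ω₁) * D' ^ (2 * q + 1) with hF
  have hrange : colsL U + colsR U * F = Q * (R * (rpinv Ω₁ * D' ^ (2 * q + 1))) := by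
    rw [← Matrix.mul_assoc Q, ← hQR, power_iteration_of_orthogonal hUk hUp hUkp hUpk hVk hVp hVkp
      hVpk hsplit q, Matrix.add_mul, Matrix.add_mul]
    congr 1
    · calc colsL U = colsL U * (((D * Dᴴ) ^ q * D) * (Ω₁ * rpinv Ω₁) * D' ^ (2 * q + 1)) := by
            rw [hpinv, Matrix.mul_one, hDpow, Matrix.mul_one]
        _ = _ := by simp only [hΩ₁, Matrix.mul_assoc]
    · simp only [hF, hΩ₂, Matrix.mul_assoc]
  have hFD : F * D = (S * Sᴴ) ^ q * (S * (Ω₂ * rpinv Ω₁)) * D' ^ (2 * q) := by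
    rw [hF, pow_succ, Matrix.mul_assoc, Matrix.mul_assoc (D' ^ (2 * q)), hD'D, Matrix.mul_one]
    simp only [Matrix.mul_assoc]
  have hfin : ∀ p : ℝ≥0∞, 2 ≤ p → p ≠ ⊤ →
      (schatten p ((1 - Q * Qᴴ) * A)) ^ 2 ≤ (schatten p S) ^ 2
        + (σ k / σ (k - 1)) ^ (4 * q) * (schatten p (S * (Ω₂ * rpinv Ω₁))) ^ 2 := by
    intro p hp2 hp
    refine (schatten_error_sq_le hp2 hp hUp hVk hVp hVkp hVpk hsplit hQ hrange).trans
      (add_le_add le_rfl ?_)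
    have hleft : ∀ M : Matrix (Fin m₂) (Fin k) ℂ,
        schatten p ((S * Sᴴ) ^ q * M) ≤ σ k ^ (2 * q) * schatten p M := by
      intro M
      have hpow : (S * Sᴴ) ^ q = diagonal fun i : Fin m₂ =>
          (((if (i : ℕ) < n₂ then σ (k + i) ^ 2 else 0) ^ q : ℝ) : ℂ) := by
        rw [hS, diagRect_mul_conjTranspose, diagonal_pow]
        congr 1
        ext i
        exact (Complex.ofReal_pow _ _).symm
      have h0 : ∀ i : Fin m₂, 0 ≤ (if (i : ℕ) < n₂ then σ (k + i) ^ 2 else 0 : ℝ) := by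
        intro i
        split_ifs <;> positivity
      rw [hpow, pow_mul]
      refine schatten_diagonal_mul_le hp2 hp _ M (fun i => pow_nonneg (h0 i) q) (by positivity)
        fun i => pow_le_pow_left₀ (h0 i) ?_ q
      split_ifs
      · exact pow_le_pow_left₀ (hσ0 _) (hσm _ _ (by omega)) 2
      · positivity
    have hright : ∀ M : Matrix (Fin m₂) (Fin k) ℂ,
        schatten p (M * D' ^ (2 * q)) ≤ (σ (k - 1))⁻¹ ^ (2 * q) * schatten p M := by
      intro M
      have hpow : (D' ^ (2 * q))ᴴ = diagonal fun i : Fin k =>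
          (((σ i)⁻¹ ^ (2 * q) : ℝ) : ℂ) := by
        rw [hD', diagonal_pow, diagonal_conjTranspose]
        congr 1
        ext i
        simp
      rw [← schatten_conjTranspose hp2 hp (M * _), ← schatten_conjTranspose hp2 hp M,
        conjTranspose_mul, hpow]
      refine schatten_diagonal_mul_le hp2 hp _ _ (fun i => ?_) (by positivity) fun i => ?_
      · have := hσpos i
        positivity
      · have := hσpos i
        exact pow_le_pow_left₀ (by positivity) (inv_anti₀ hrank (hσm _ _ (by omega))) _
    have hbound : schatten p (F * D)
        ≤ (σ k / σ (k - 1)) ^ (2 * q) * schatten p (S * (Ω₂ * rpinv Ω₁)) := by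
      rw [hFD]
      refine (hright _).trans ((mul_le_mul_of_nonneg_left (hleft _) (by positivity)).trans_eq ?_)
      rw [div_eq_mul_inv, mul_pow]
      ring
    calc schatten p (F * D) ^ 2
        ≤ ((σ k / σ (k - 1)) ^ (2 * q) * schatten p (S * (Ω₂ * rpinv Ω₁))) ^ 2 :=
          pow_le_pow_left₀ (schatten_nonneg p _) hbound 2
      _ = _ := by
          rw [mul_pow, ← pow_mul]
          congr 2
          ring
  intro p hp2
  by_cases hp : p = ⊤
  · subst hp
    refine le_of_tendsto_of_tendsto ((tendsto_schatten_top _).pow 2)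
      (((tendsto_schatten_top S).pow 2).add
        (((tendsto_schatten_top (S * (Ω₂ * rpinv Ω₁))).pow 2).const_mul _)) ?_
    filter_upwards [Filter.eventually_ge_atTop 2] with t ht
    exact hfin t (by exact_mod_cast ht) (ENNReal.natCast_ne_top t)
  · exact hfin p hp2 hp
end
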